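/- (Berger-Tung inner bound.) Let X₁, X₂, U₁, U₂, Y₁, Y₂ be finite sets, let P̄_{X₁X₂} be a joint pmf, let P̄_{U₁|X₁} and P̄_{U₂|X₂} be conditional pmfs, and define P̄(u₁, x₁, x₂, u₂) = P̄_{X₁X₂}(x₁,x₂) P̄_{U₁|X₁}(u₁|x₁) P̄_{U₂|X₂}(u₂|x₂). Let d_k : X_k × Y_k → ℝ≥0 (k = 1, 2) be distortion measures and φ_k : U₁ × U₂ → Y_k functions with E_{P̄}[ d_k(X_k, φ_k(U₁, U₂)) ] ≤ D_k for k = 1, 2. Then any rate pair (R₁, R₂) satisfying R₁ > I_{P̄}(X₁; U₁ | U₂), R₂ > I_{P̄}(X₂; U₂ | U₁), and R₁ + R₂ > I_{P̄}(X₁, X₂; U₁, U₂) is achievable under distortion levels (D₁, D₂): there exist sequences of (possibly stochastic) encoders f₁ₙ : X₁^n → M₁ with |M₁| ≤ ⌈2^{nR₁}⌉ and f₂ₙ : X₂^n → M₂ with |M₂| ≤ ⌈2^{nR₂}⌉, and a (possibly stochastic) decoder gₙ : M₁ × M₂ → Y₁^n × Y₂^n, such that for the i.i.d. sources (X₁ₜ,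 X₂ₜ) ~ P̄_{X₁X₂}, lim sup_n E[ (1/n) ∑_{t=1}^n d_k(X_{k,t}, Y_{k,t}) ] ≤ D_k for k = 1, 2. -/

import Mathlib

open Finset

/-- Mutual information (in bits) of a joint pmf given as `P : A → B → ℝ`:
`I(A;B) = ∑_{a,b} P(a,b) log₂( P(a,b) / (P_A(a) P_B(b)) )`. -/
noncomputable def mutInf {A B : Type*} [Fintype A] [Fintype B] (P : A → B → ℝ) : ℝ :=
  ∑ a, ∑ b, P a b * Real.logb 2 (P a b / ((∑ b', P a b') * (∑ a', P a' b)))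

/-- Conditional mutual information (in bits) of a joint pmf `P : A → B → C → ℝ`:
`I(A;B|C) = ∑_{a,b,c} P(a,b,c) log₂( P(a,b,c) P_C(c) / (P_{AC}(a,c) P_{BC}(b,c)) )`. -/
noncomputable def condMutInf {A B C : Type*} [Fintype A] [Fintype B] [Fintype C]
    (P : A → B → C → ℝ) : ℝ :=
  ∑ a, ∑ b, ∑ c, P a b c *
    Real.logb 2 ((P a b c * ∑ a', ∑ b', P a' b' c) /
      ((∑ b', P a b' c) * (∑ a', P a' b c)))

/-- Expectation of `F` over a random codebook `C : J → V` with i.i.d. entries of law `q`. -/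
noncomputable def codebookExp {J V : Type*} [Fintype J] [DecidableEq J] [Fintype V]
    (q : V → ℝ) (F : (J → V) → ℝ) : ℝ :=
  ∑ C : J → V, (∏ j, q (C j)) * F C

open Classical in
/-- The real-valued indicator of a proposition. -/
noncomputable def indic (P : Prop) : ℝ := if P then 1 else 0

lemma indic_nonneg (P : Prop) : 0 ≤ indic P := by
  unfold indic; split_ifs <;> norm_num

lemma indic_le_one (P : Prop) : indic P ≤ 1 := by
  unfold indic; split_ifs <;> norm_num

lemma indic_of {P : Prop} (h : P) : indic P = 1 := if_pos h

lemma indic_of_not {P : Prop} (h : ¬ P) : indic P = 0 := if_neg h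

lemma indic_mono {P Q : Prop} (h : P → Q) : indic P ≤ indic Q := by
  by_cases hP : P
  · rw [indic_of hP, indic_of (h hP)]
  · rw [indic_of_not hP]
    exact indic_nonneg Q

section Codebook

variable {J V : Type*} [Fintype J] [DecidableEq J] [Fintype V] {q : V → ℝ}

lemma sum_pi_prod_eq (h : J → V → ℝ) :
    ∑ C : J → V, ∏ j, h j (C j) = ∏ j, ∑ v, h j v := by
  rw [Finset.prod_univ_sum, Fintype.piFinset_univ]

lemma codebookExp_mul (hq1 : ∑ v, q v = 1) {j j' : J} (hjj : j ≠ j') (g h : V → ℝ) :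
    codebookExp q (fun C => g (C j) * h (C j')) = (∑ v, q v * g v) * ∑ v, q v * h v := by
  have key : ∀ C : J → V, (∏ i, q (C i)) * (g (C j) * h (C j')) =
      ∏ i, (q (C i) * ((if i = j then g (C i) else 1) * (if i = j' then h (C i) else 1))) := by
    intro C
    rw [prod_mul_distrib, prod_mul_distrib]
    simp
  unfold codebookExp
  simp_rw [key]
  rw [sum_pi_prod_eq (fun i v => q v * ((if i = j then g v else 1) * (if i = j' then h v else 1)))]
  have hfac : ∀ i, ∑ v, q v * ((if i = j then g v else 1) * (if i = j' then h v else 1)) =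
      (if i = j then ∑ v, q v * g v else 1) * (if i = j' then ∑ v, q v * h v else 1) := by
    intro i
    by_cases h1 : i = j
    · have h2 : i ≠ j' := fun h => hjj (h1.symm.trans h)
      simp [h1, hjj]
    · by_cases h2 : i = j'
      · simp [h2, hjj.symm]
      · simp [h1, h2, hq1]
  simp_rw [hfac]
  rw [prod_mul_distrib]
  simp

lemma codebookExp_apply (hq1 : ∑ v, q v = 1) (j : J) (g : V → ℝ) :
    codebookExp q (fun C => g (C j)) = ∑ v, q v * g v := by
  have key : ∀ C : J → V, (∏ i, q (C i)) * g (C j) =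
      ∏ i, (q (C i) * (if i = j then g (C i) else 1)) := by
    intro C
    rw [prod_mul_distrib]
    simp
  unfold codebookExp
  simp_rw [key]
  rw [sum_pi_prod_eq (fun i v => q v * (if i = j then g v else 1))]
  have hfac : ∀ i, ∑ v, q v * (if i = j then g v else 1) =
      if i = j then ∑ v, q v * g v else 1 := by
    intro i
    by_cases h1 : i = j <;> simp [h1, hq1]
  simp_rw [hfac]
  simp

lemma codebookExp_const (hq1 : ∑ v, q v = 1) (c : ℝ) :
    codebookExp q (fun _ : J → V => c) = c := by
  unfold codebookExp
  rw [← sum_mul, sum_pi_prod_eq (fun _ : J => q)]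
  simp [hq1]

lemma codebookExp_add (F G : (J → V) → ℝ) :
    codebookExp q (fun C => F C + G C) = codebookExp q F + codebookExp q G := by
  simp [codebookExp, mul_add, sum_add_distrib]

lemma codebookExp_mul_left (c : ℝ) (F : (J → V) → ℝ) :
    codebookExp q (fun C => c * F C) = c * codebookExp q F := by
  simp only [codebookExp, mul_sum]
  exact sum_congr rfl fun C _ => by ring

lemma codebookExp_sum {ι : Type*} (s : Finset ι) (F : ι → (J → V) → ℝ) :
    codebookExp q (fun C => ∑ i ∈ s, F i C) = ∑ i ∈ s, codebookExp q (F i) := by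
  simp only [codebookExp, mul_sum]
  exact sum_comm

lemma codebookExp_mono (hq0 : ∀ v, 0 ≤ q v) {F G : (J → V) → ℝ} (h : ∀ C, F C ≤ G C) :
    codebookExp q F ≤ codebookExp q G :=
  sum_le_sum fun C _ => mul_le_mul_of_nonneg_left (h C) (prod_nonneg fun _ _ => hq0 _)

lemma exists_le_codebookExp (hq0 : ∀ v, 0 ≤ q v) (hq1 : ∑ v, q v = 1) (F : (J → V) → ℝ) :
    ∃ C, F C ≤ codebookExp q F := by
  by_contra! hcon
  have hle : codebookExp q (fun _ : J → V => codebookExp q F) ≤ codebookExp q F :=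
    codebookExp_mono hq0 fun C => (hcon C).le
  have htot : ∑ C : J → V, ∏ j, q (C j) = 1 := by
    rw [sum_pi_prod_eq (fun _ : J => q)]; simp [hq1]
  obtain ⟨C, -, hC⟩ := exists_ne_zero_of_sum_ne_zero (by rw [htot]; exact one_ne_zero)
  have hpos : 0 < ∏ j, q (C j) := lt_of_le_of_ne (prod_nonneg fun _ _ => hq0 _) (Ne.symm hC)
  have hlt : codebookExp q (fun _ : J → V => codebookExp q F) < codebookExp q F :=
    sum_lt_sum (fun C _ => mul_le_mul_of_nonneg_left (hcon C).le (prod_nonneg fun _ _ => hq0 _))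
      ⟨C, mem_univ _, mul_lt_mul_of_pos_left (hcon C) hpos⟩
  rw [codebookExp_const hq1] at hlt
  exact lt_irrefl _ hlt

/-- Variance of an empirical mean over a random codebook. -/
lemma codebookExp_sq_mean_sub_le [Nonempty J] (hq1 : ∑ v, q v = 1) (s : V → ℝ) :
    codebookExp q (fun C : J → V =>
      ((Fintype.card J : ℝ)⁻¹ * ∑ j, s (C j) - ∑ v, q v * s v) ^ 2) ≤
      (Fintype.card J : ℝ)⁻¹ * ∑ v, q v * s v ^ 2 := by
  set K : ℝ := (Fintype.card J : ℝ)
  have hK : 0 < K := by simp [K, Fintype.card_pos]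
  set m := ∑ v, q v * s v with hm
  have hzero : ∑ v, q v * (s v - m) = 0 := by
    simp only [mul_sub, sum_sub_distrib, ← sum_mul, hq1, ← hm]; ring
  have hvar : ∑ v, q v * ((s v - m) * (s v - m)) ≤ ∑ v, q v * s v ^ 2 := by
    have : ∑ v, q v * ((s v - m) * (s v - m)) = ∑ v, q v * s v ^ 2 - m ^ 2 := by
      have : ∀ v, q v * ((s v - m) * (s v - m)) =
          q v * s v ^ 2 - 2 * m * (q v * s v) + m ^ 2 * q v := fun v => by ring
      simp only [this, sum_add_distrib, sum_sub_distrib, ← mul_sum, hq1, ← hm]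
      ring
    rw [this]
    nlinarith [sq_nonneg m]
  have hexp : ∀ C : J → V, (K⁻¹ * ∑ j, s (C j) - m) ^ 2 =
      (K⁻¹ * K⁻¹) * ∑ j, ∑ j', (s (C j) - m) * (s (C j') - m) := by
    intro C
    rw [← sum_mul_sum, sum_sub_distrib]
    simp only [sum_const, card_univ, nsmul_eq_mul]
    change _ = K⁻¹ * K⁻¹ * ((_ - K * m) * (_ - K * m))
    field_simp
  simp_rw [hexp]
  rw [codebookExp_mul_left, codebookExp_sum]
  simp_rw [codebookExp_sum]
  have hterm : ∀ j j' : J, codebookExp q (fun C => (s (C j) - m) * (s (C j') - m)) =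
      if j = j' then ∑ v, q v * ((s v - m) * (s v - m)) else 0 := by
    intro j j'
    split_ifs with h
    · subst h
      exact codebookExp_apply hq1 j fun v => (s v - m) * (s v - m)
    · rw [codebookExp_mul hq1 h (fun v => s v - m) fun v => s v - m, hzero, zero_mul]
  simp only [hterm, sum_ite_eq, mem_univ, if_true, sum_const, card_univ, nsmul_eq_mul]
  change K⁻¹ * K⁻¹ * (K * _) ≤ _
  rw [show ∀ z, K⁻¹ * K⁻¹ * (K * z) = K⁻¹ * z from fun z => by field_simp]
  exact mul_le_mul_of_nonneg_left hvar (by positivity)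

/-- Soft covering: the empirical mean over a random codebook of a density `r` with respect to `q`
is close to `1` in expectation. -/
lemma codebookExp_abs_mean_sub_one_le [Nonempty J] (hq0 : ∀ v, 0 ≤ q v) (hq1 : ∑ v, q v = 1)
    {r : V → ℝ} (hr0 : ∀ v, 0 ≤ r v) (hr1 : ∑ v, q v * r v = 1) {t γ : ℝ} (ht : 0 < t)
    (hγ : 0 < γ) :
    codebookExp q (fun C : J → V => |(Fintype.card J : ℝ)⁻¹ * ∑ j, r (C j) - 1|) ≤
      t + γ / (Fintype.card J * t) + 2 * ∑ v, q v * r v * indic (γ < r v) := by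
  set K : ℝ := (Fintype.card J : ℝ) with hKdef
  have hK : 0 < K := by simp [K, Fintype.card_pos]
  let s : V → ℝ := fun v => r v * indic (¬ γ < r v)
  let b : V → ℝ := fun v => r v * indic (γ < r v)
  have hsb : ∀ v, r v = s v + b v := fun v => by
    by_cases h : γ < r v <;> simp [s, b, indic, h]
  have hb0 : ∀ v, 0 ≤ b v := fun v => mul_nonneg (hr0 v) (indic_nonneg _)
  have htail : ∑ v, q v * b v = ∑ v, q v * r v * indic (γ < r v) :=
    sum_congr rfl fun v _ => (mul_assoc _ _ _).symm
  rw [← htail]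
  have hm : ∑ v, q v * s v = 1 - ∑ v, q v * b v := by
    rw [← hr1, ← sum_sub_distrib]
    exact sum_congr rfl fun v _ => by rw [hsb v]; ring
  have hs2 : ∑ v, q v * s v ^ 2 ≤ γ := by
    calc ∑ v, q v * s v ^ 2 ≤ ∑ v, γ * (q v * r v) := by
          refine sum_le_sum fun v _ => ?_
          have : s v ^ 2 ≤ γ * r v := by
            by_cases h : γ < r v
            · rw [show s v = 0 by simp only [s, indic_of_not (not_not.2 h), mul_zero],
                zero_pow two_ne_zero]
              exact mul_nonneg hγ.le (hr0 v)
            · simp only [s, indic, h, not_false_eq_true, if_true, mul_one]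
              nlinarith [hr0 v]
          nlinarith [mul_le_mul_of_nonneg_left this (hq0 v)]
      _ = γ := by rw [← mul_sum, hr1, mul_one]
  have hpt : ∀ C : J → V, |K⁻¹ * ∑ j, r (C j) - 1| ≤
      (t + t⁻¹ * (K⁻¹ * ∑ j, s (C j) - ∑ v, q v * s v) ^ 2) +
        (K⁻¹ * ∑ j, b (C j) + ∑ v, q v * b v) := by
    intro C
    set z := K⁻¹ * ∑ j, s (C j) - ∑ v, q v * s v with hz
    have hB : 0 ≤ ∑ v, q v * b v := sum_nonneg fun v _ => mul_nonneg (hq0 v) (hb0 v)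
    have hBC : 0 ≤ K⁻¹ * ∑ j, b (C j) :=
      mul_nonneg (by positivity) (sum_nonneg fun j _ => hb0 _)
    have hdec : K⁻¹ * ∑ j, r (C j) - 1 = z + (K⁻¹ * ∑ j, b (C j) - ∑ v, q v * b v) := by
      rw [hz, hm]
      simp only [hsb, sum_add_distrib]
      ring
    have hza : |z| ≤ t + t⁻¹ * z ^ 2 := by
      have h1 : |z| * t ≤ t ^ 2 + z ^ 2 := by
        nlinarith [sq_abs z, sq_nonneg (|z| - t), sq_nonneg (|z|), sq_nonneg t]
      have h2 : t + t⁻¹ * z ^ 2 = (t ^ 2 + z ^ 2) / t := by field_simp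
      rw [h2, le_div_iff₀ ht]
      exact h1
    rw [hdec]
    refine (abs_add_le _ _).trans (add_le_add hza ?_)
    rw [abs_le]
    constructor <;> linarith
  refine (codebookExp_mono hq0 hpt).trans ?_
  rw [codebookExp_add, codebookExp_add, codebookExp_add, codebookExp_mul_left,
    codebookExp_mul_left, codebookExp_const hq1, codebookExp_const hq1, codebookExp_sum]
  have hb' : ∀ j : J, codebookExp q (fun C => b (C j)) = ∑ v, q v * b v := fun j =>
    codebookExp_apply hq1 j b
  simp only [hb', sum_const, card_univ, nsmul_eq_mul]
  rw [← hKdef, inv_mul_cancel_left₀ hK.ne']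
  have hvar := codebookExp_sq_mean_sub_le (J := J) hq1 s
  rw [← hKdef] at hvar
  have h1 : t⁻¹ * codebookExp q (fun C : J → V => (K⁻¹ * ∑ j, s (C j) - ∑ v, q v * s v) ^ 2) ≤
      γ / (K * t) := by
    calc _ ≤ t⁻¹ * (K⁻¹ * γ) := by gcongr; exact hvar.trans (by gcongr)
      _ = γ / (K * t) := by field_simp
  linarith

end Codebook

section LikelihoodEncoder

variable {J V : Type*} [Fintype J]

/-- The likelihood encoder: given the likelihoods `s` and a codebook `C`, the index `j` is chosen
with probability proportional to `s (C j)`. -/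
noncomputable def likelihoodEncoder (s : V → ℝ) (C : J → V) (j : J) : ℝ :=
  if ∑ i, s (C i) = 0 then (Fintype.card J : ℝ)⁻¹ else s (C j) / ∑ i, s (C i)

lemma likelihoodEncoder_nonneg {s : V → ℝ} (hs : ∀ v, 0 ≤ s v) (C : J → V) (j : J) :
    0 ≤ likelihoodEncoder s C j := by
  unfold likelihoodEncoder
  split_ifs
  · positivity
  · exact div_nonneg (hs _) (sum_nonneg fun _ _ => hs _)

lemma sum_likelihoodEncoder [Nonempty J] (s : V → ℝ) (C : J → V) :
    ∑ j, likelihoodEncoder s C j = 1 := by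
  unfold likelihoodEncoder
  split_ifs with h
  · simp
  · rw [← sum_div, div_self h]

lemma sum_abs_likelihoodEncoder_sub [Nonempty J] {s : V → ℝ} (hs : ∀ v, 0 ≤ s v) (C : J → V) :
    ∑ j, |likelihoodEncoder s C j - (Fintype.card J : ℝ)⁻¹ * s (C j)| =
      |(Fintype.card J : ℝ)⁻¹ * ∑ j, s (C j) - 1| := by
  have hK : (0 : ℝ) < Fintype.card J := by simp [Fintype.card_pos]
  have hS : 0 ≤ ∑ i, s (C i) := sum_nonneg fun _ _ => hs _
  by_cases h : ∑ i, s (C i) = 0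
  · have h0 : ∀ j, s (C j) = 0 := fun j =>
      (sum_eq_zero_iff_of_nonneg fun i _ => hs (C i)).1 h j (mem_univ j)
    simp [likelihoodEncoder, h0]
  · have : ∀ j, |likelihoodEncoder s C j - (Fintype.card J : ℝ)⁻¹ * s (C j)| =
        s (C j) * |(∑ i, s (C i))⁻¹ - (Fintype.card J : ℝ)⁻¹| := by
      intro j
      rw [likelihoodEncoder, if_neg h, ← abs_of_nonneg (hs (C j)), ← abs_mul,
        abs_of_nonneg (hs (C j))]
      congr 1
      ring
    simp_rw [this]
    rw [← sum_mul]
    nth_rewrite 1 [← abs_of_nonneg hS]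
    rw [← abs_mul, mul_sub, mul_inv_cancel₀ h, abs_sub_comm, mul_comm]

end LikelihoodEncoder

section ChangeOfMeasure

variable {J1 J2 V1 V2 : Type*} [Fintype J1] [DecidableEq J1] [Nonempty J1]
  [Fintype J2] [DecidableEq J2] [Nonempty J2] [Fintype V1] [Fintype V2]
  {q1 : V1 → ℝ} {q2 : V2 → ℝ} {s1 : V1 → ℝ} {s2 : V2 → ℝ}

/-- Replacing both likelihood encoders by the unnormalised likelihoods costs at most the two soft
covering errors. -/
lemma codebookExp_likelihoodEncoder_le (hq10 : ∀ v, 0 ≤ q1 v) (hq11 : ∑ v, q1 v = 1)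
    (hq20 : ∀ v, 0 ≤ q2 v) (hq21 : ∑ v, q2 v = 1) (hs10 : ∀ v, 0 ≤ s1 v)
    (hs11 : ∑ v, q1 v * s1 v = 1) (hs20 : ∀ v, 0 ≤ s2 v) (hs21 : ∑ v, q2 v * s2 v = 1)
    (bad : (J1 → V1) → (J2 → V2) → J1 → J2 → ℝ) (hbad0 : ∀ C1 C2 j1 j2, 0 ≤ bad C1 C2 j1 j2)
    (hbad1 : ∀ C1 C2 j1 j2, bad C1 C2 j1 j2 ≤ 1)
    {t γ1 γ2 : ℝ} (ht : 0 < t) (hγ1 : 0 < γ1) (hγ2 : 0 < γ2) :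
    codebookExp q1 (fun C1 => codebookExp q2 fun C2 => ∑ j1, ∑ j2,
        likelihoodEncoder s1 C1 j1 * likelihoodEncoder s2 C2 j2 * bad C1 C2 j1 j2) ≤
      codebookExp q1 (fun C1 => codebookExp q2 fun C2 => ∑ j1, ∑ j2,
        ((Fintype.card J1 : ℝ)⁻¹ * s1 (C1 j1)) * ((Fintype.card J2 : ℝ)⁻¹ * s2 (C2 j2)) *
          bad C1 C2 j1 j2) +
      (t + γ1 / (Fintype.card J1 * t) + 2 * ∑ v, q1 v * s1 v * indic (γ1 < s1 v)) +
      (t + γ2 / (Fintype.card J2 * t) + 2 * ∑ v, q2 v * s2 v * indic (γ2 < s2 v)) := by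
  have hK1 : (0 : ℝ) < Fintype.card J1 := by simp [Fintype.card_pos]
  have hpt : ∀ C1 C2, ∑ j1, ∑ j2,
        likelihoodEncoder s1 C1 j1 * likelihoodEncoder s2 C2 j2 * bad C1 C2 j1 j2 ≤
      (∑ j1, ∑ j2, ((Fintype.card J1 : ℝ)⁻¹ * s1 (C1 j1)) *
          ((Fintype.card J2 : ℝ)⁻¹ * s2 (C2 j2)) * bad C1 C2 j1 j2 +
        |(Fintype.card J1 : ℝ)⁻¹ * ∑ j, s1 (C1 j) - 1|) +
      ((Fintype.card J1 : ℝ)⁻¹ * ∑ j, s1 (C1 j)) *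
        |(Fintype.card J2 : ℝ)⁻¹ * ∑ j, s2 (C2 j) - 1| := by
    intro C1 C2
    have h1 : |(Fintype.card J1 : ℝ)⁻¹ * ∑ j, s1 (C1 j) - 1| =
        ∑ j1, ∑ j2, |likelihoodEncoder s1 C1 j1 - (Fintype.card J1 : ℝ)⁻¹ * s1 (C1 j1)| *
          likelihoodEncoder s2 C2 j2 := by
      rw [← sum_mul_sum, sum_likelihoodEncoder, sum_abs_likelihoodEncoder_sub hs10, mul_one]
    have h2 : ((Fintype.card J1 : ℝ)⁻¹ * ∑ j, s1 (C1 j)) *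
        |(Fintype.card J2 : ℝ)⁻¹ * ∑ j, s2 (C2 j) - 1| =
        ∑ j1, ∑ j2, ((Fintype.card J1 : ℝ)⁻¹ * s1 (C1 j1)) *
          |likelihoodEncoder s2 C2 j2 - (Fintype.card J2 : ℝ)⁻¹ * s2 (C2 j2)| := by
      rw [← sum_mul_sum, sum_abs_likelihoodEncoder_sub hs20, mul_sum]
    rw [h1, h2]
    simp only [← sum_add_distrib]
    refine sum_le_sum fun j1 _ => sum_le_sum fun j2 _ => ?_
    set a := likelihoodEncoder s1 C1 j1
    set b := likelihoodEncoder s2 C2 j2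
    set a' := (Fintype.card J1 : ℝ)⁻¹ * s1 (C1 j1)
    set b' := (Fintype.card J2 : ℝ)⁻¹ * s2 (C2 j2)
    have hb : 0 ≤ b := likelihoodEncoder_nonneg hs20 _ _
    have ha' : 0 ≤ a' := mul_nonneg (by positivity) (hs10 _)
    have hβ0 := hbad0 C1 C2 j1 j2
    have hβ1 := hbad1 C1 C2 j1 j2
    set β := bad C1 C2 j1 j2
    have e1 : (a - a') * b * β ≤ |a - a'| * b := by
      calc (a - a') * b * β ≤ |a - a'| * b * β := by gcongr; exact le_abs_self _
        _ ≤ |a - a'| * b * 1 := by gcongr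
        _ = _ := mul_one _
    have e2 : a' * (b - b') * β ≤ a' * |b - b'| := by
      calc a' * (b - b') * β ≤ a' * |b - b'| * β := by gcongr; exact le_abs_self _
        _ ≤ a' * |b - b'| * 1 := by gcongr
        _ = _ := mul_one _
    nlinarith
  refine (codebookExp_mono hq10 fun C1 => codebookExp_mono hq20 (hpt C1)).trans ?_
  simp only [codebookExp_add, codebookExp_mul_left, codebookExp_const hq21]
  have hlast : codebookExp q1 (fun C1 : J1 → V1 => ((Fintype.card J1 : ℝ)⁻¹ * ∑ j, s1 (C1 j)) *
      codebookExp q2 fun C2 : J2 → V2 => |(Fintype.card J2 : ℝ)⁻¹ * ∑ j, s2 (C2 j) - 1|) =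
      codebookExp q2 fun C2 : J2 → V2 => |(Fintype.card J2 : ℝ)⁻¹ * ∑ j, s2 (C2 j) - 1| := by
    simp only [mul_comm _ (codebookExp q2 _), codebookExp_mul_left, codebookExp_sum,
      codebookExp_apply hq11 _ s1, hs11, sum_const, card_univ, nsmul_eq_mul, mul_one]
    rw [inv_mul_cancel₀ hK1.ne', mul_one]
  rw [hlast]
  have a1 := codebookExp_abs_mean_sub_one_le (J := J1) hq10 hq11 hs10 hs11 ht hγ1
  have a2 := codebookExp_abs_mean_sub_one_le (J := J2) hq20 hq21 hs20 hs21 ht hγ2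
  linarith

end ChangeOfMeasure

section PairExpectation

variable {J V : Type*} [Fintype J] [DecidableEq J] [Fintype V] {q s : V → ℝ}

lemma codebookExp_density_mul (hq1 : ∑ v, q v = 1) (hs1 : ∑ v, q v * s v = 1) (j j' : J)
    (h : V → ℝ) :
    codebookExp q (fun C => s (C j) * h (C j')) =
      ∑ v, q v * (if j = j' then s v else 1) * h v := by
  split_ifs with hj
  · subst hj
    rw [codebookExp_apply hq1 j fun v => s v * h v]
    exact sum_congr rfl fun v _ => by ring
  · rw [codebookExp_mul hq1 hj, hs1, one_mul]
    exact sum_congr rfl fun v _ => by ring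

lemma codebookExp_codebookExp_density_mul {J' V' : Type*} [Fintype J'] [DecidableEq J']
    [Fintype V'] {q' s' : V' → ℝ} (hq1 : ∑ v, q v = 1) (hs1 : ∑ v, q v * s v = 1)
    (hq1' : ∑ v, q' v = 1) (hs1' : ∑ v, q' v * s' v = 1) (j i : J) (j' i' : J')
    (h : V → V' → ℝ) :
    codebookExp q (fun C => codebookExp q' fun C' =>
        s (C j) * s' (C' j') * h (C i) (C' i')) =
      ∑ v, ∑ v', (q v * (if j = i then s v else 1)) *
        (q' v' * (if j' = i' then s' v' else 1)) * h v v' := by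
  simp only [mul_assoc (s _), codebookExp_mul_left]
  simp only [codebookExp_density_mul hq1' hs1' j' i']
  rw [codebookExp_density_mul hq1 hs1 j i fun v =>
    ∑ v', q' v' * (if j' = i' then s' v' else 1) * h v v']
  simp only [mul_sum, mul_assoc]

end PairExpectation

/-- The decoder that looks in the two received bins for a pair of codewords passing the test `T`. -/
noncomputable def binDecoder {I1 I2 L1 L2 V1 V2 : Type*} [Nonempty L1] [Nonempty L2]
    (T : V1 → V2 → Prop) (C1 : I1 × L1 → V1) (C2 : I2 × L2 → V2) (m1 : I1) (m2 : I2) : V1 × V2 :=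
  let l := Classical.epsilon fun l : L1 × L2 => T (C1 (m1, l.1)) (C2 (m2, l.2))
  (C1 (m1, l.1), C2 (m2, l.2))

lemma indic_binDecoder_le {I1 I2 L1 L2 V1 V2 : Type*} [Nonempty L1] [Nonempty L2] [Fintype L1]
    [Fintype L2] [DecidableEq L1] [DecidableEq L2] (T : V1 → V2 → Prop) (B : V1 → V2 → Prop)
    (C1 : I1 × L1 → V1) (C2 : I2 × L2 → V2) (j1 : I1 × L1) (j2 : I2 × L2) :
    indic (B (binDecoder T C1 C2 j1.1 j2.1).1 (binDecoder T C1 C2 j1.1 j2.1).2) ≤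
      (indic (B (C1 j1) (C2 j2)) + indic (¬ T (C1 j1) (C2 j2))) +
        ∑ l ∈ univ.erase (j1.2, j2.2), indic (T (C1 (j1.1, l.1)) (C2 (j2.1, l.2))) := by
  have hsum : 0 ≤ ∑ l ∈ univ.erase (j1.2, j2.2), indic (T (C1 (j1.1, l.1)) (C2 (j2.1, l.2))) :=
    sum_nonneg fun _ _ => indic_nonneg _
  have hB := indic_nonneg (B (C1 j1) (C2 j2))
  by_cases hT : T (C1 j1) (C2 j2)
  · set l := Classical.epsilon fun l : L1 × L2 => T (C1 (j1.1, l.1)) (C2 (j2.1, l.2)) with hl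
    have hTl : T (C1 (j1.1, l.1)) (C2 (j2.1, l.2)) :=
      Classical.epsilon_spec (p := fun l : L1 × L2 => T (C1 (j1.1, l.1)) (C2 (j2.1, l.2)))
        ⟨(j1.2, j2.2), hT⟩
    have hdec : binDecoder T C1 C2 j1.1 j2.1 = (C1 (j1.1, l.1), C2 (j2.1, l.2)) := rfl
    by_cases hlj : l = (j1.2, j2.2)
    · rw [hdec, hlj]
      linarith [indic_nonneg (¬ T (C1 j1) (C2 j2))]
    · have h1 : 1 ≤ ∑ l ∈ univ.erase (j1.2, j2.2),
          indic (T (C1 (j1.1, l.1)) (C2 (j2.1, l.2))) := by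
        rw [← indic_of hTl]
        exact single_le_sum (f := fun l : L1 × L2 => indic (T (C1 (j1.1, l.1)) (C2 (j2.1, l.2))))
          (fun _ _ => indic_nonneg _) (mem_erase.2 ⟨hlj, mem_univ _⟩)
      linarith [indic_le_one (B (binDecoder T C1 C2 j1.1 j2.1).1
        (binDecoder T C1 C2 j1.1 j2.1).2), indic_nonneg (¬ T (C1 j1) (C2 j2))]
  · rw [indic_of hT]
    linarith [indic_le_one (B (binDecoder T C1 C2 j1.1 j2.1).1
      (binDecoder T C1 C2 j1.1 j2.1).2)]

section OneShot

variable {Ω V1 V2 : Type*} [Fintype Ω]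
  {p : Ω → ℝ} {w1 : V1 → Ω → ℝ} {w2 : V2 → Ω → ℝ} {q1 : V1 → ℝ} {q2 : V2 → ℝ}

lemma mul_marginal_mul_div (hp0 : ∀ ω, 0 ≤ p ω) (hw0 : ∀ v ω, 0 ≤ w1 v ω)
    (hq : ∀ v, q1 v = ∑ ω, p ω * w1 v ω) (v : V1) (ω : Ω) :
    p ω * (q1 v * (w1 v ω / q1 v)) = p ω * w1 v ω := by
  by_cases h : q1 v = 0
  · have h' := hq v
    rw [h, eq_comm, sum_eq_zero_iff_of_nonneg fun ω _ => mul_nonneg (hp0 ω) (hw0 v ω)] at h'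
    rw [h' ω (mem_univ ω), h, zero_mul, mul_zero]
  · rw [mul_div_cancel₀ _ h]

lemma marginal_nonneg (hp0 : ∀ ω, 0 ≤ p ω) (hw0 : ∀ v ω, 0 ≤ w1 v ω)
    (hq : ∀ v, q1 v = ∑ ω, p ω * w1 v ω) (v : V1) : 0 ≤ q1 v := by
  rw [hq]
  exact sum_nonneg fun ω _ => mul_nonneg (hp0 ω) (hw0 v ω)

variable [Fintype V1] [Fintype V2]

lemma sum_marginal_mul_div (hp0 : ∀ ω, 0 ≤ p ω) (hw0 : ∀ v ω, 0 ≤ w1 v ω)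
    (hw1 : ∀ ω, ∑ v, w1 v ω = 1) (hq : ∀ v, q1 v = ∑ ω, p ω * w1 v ω) {ω : Ω} (hω : p ω ≠ 0) :
    ∑ v, q1 v * (w1 v ω / q1 v) = 1 := by
  apply mul_left_cancel₀ hω
  rw [mul_sum, sum_congr rfl fun v _ => mul_marginal_mul_div hp0 hw0 hq v ω, ← mul_sum, hw1]

lemma sum_marginal (hp1 : ∑ ω, p ω = 1) (hw1 : ∀ ω, ∑ v, w1 v ω = 1)
    (hq : ∀ v, q1 v = ∑ ω, p ω * w1 v ω) : ∑ v, q1 v = 1 := by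
  simp_rw [hq]
  rw [sum_comm]
  simp_rw [← mul_sum, hw1, mul_one, hp1]

/-- A pair of codewords, not both of which are the selected ones, is distributed as the product of
the marginals. -/
lemma sum_mul_cross (hp0 : ∀ ω, 0 ≤ p ω) (hp1 : ∑ ω, p ω = 1)
    (hw10 : ∀ v ω, 0 ≤ w1 v ω) (hw20 : ∀ v ω, 0 ≤ w2 v ω)
    (hq1 : ∀ v, q1 v = ∑ ω, p ω * w1 v ω) (hq2 : ∀ v, q2 v = ∑ ω, p ω * w2 v ω)
    (e1 e2 : Prop) [Decidable e1] [Decidable e2] (he : ¬ (e1 ∧ e2)) (τ : V1 → V2 → ℝ) :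
    ∑ ω, p ω * ∑ v1, ∑ v2, (q1 v1 * (if e1 then w1 v1 ω / q1 v1 else 1)) *
        (q2 v2 * (if e2 then w2 v2 ω / q2 v2 else 1)) * τ v1 v2 =
      ∑ v1, ∑ v2, q1 v1 * q2 v2 * τ v1 v2 := by
  have hswap : ∀ f : Ω → V1 → V2 → ℝ, ∑ ω, p ω * ∑ v1, ∑ v2, f ω v1 v2 * τ v1 v2 =
      ∑ v1, ∑ v2, (∑ ω, p ω * f ω v1 v2) * τ v1 v2 := by
    intro f
    simp only [mul_sum, sum_mul]
    rw [sum_comm]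
    refine sum_congr rfl fun v1 _ => ?_
    rw [sum_comm]
    simp only [mul_assoc]
  rw [hswap fun ω v1 v2 => (q1 v1 * (if e1 then w1 v1 ω / q1 v1 else 1)) *
        (q2 v2 * (if e2 then w2 v2 ω / q2 v2 else 1))]
  refine sum_congr rfl fun v1 _ => sum_congr rfl fun v2 _ => ?_
  congr 1
  by_cases h1 : e1
  · have h2 : ¬ e2 := fun h => he ⟨h1, h⟩
    simp only [h1, h2, if_true, if_false, mul_one, ← mul_assoc, ← sum_mul]
    rw [hq1 v1]
    congr 1
    refine sum_congr rfl fun ω _ => ?_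
    rw [mul_assoc, ← hq1, mul_marginal_mul_div hp0 hw10 hq1]
  · by_cases h2 : e2
    · simp only [h1, h2, if_true, if_false, mul_one]
      rw [hq2 v2, mul_sum]
      refine sum_congr rfl fun ω _ => ?_
      rw [← hq2, mul_left_comm, mul_marginal_mul_div hp0 hw20 hq2]
    · simp only [h1, h2, if_false, mul_one, ← sum_mul, hp1, one_mul]

/-- Expected value of the failure indicator of the unnormalised likelihood encoders over the random
codebooks. -/
lemma sum_codebookExp_binDecoder_le {I1 I2 L1 L2 : Type*} [Fintype I1] [DecidableEq I1]
    [Nonempty I1] [Fintype I2] [DecidableEq I2] [Nonempty I2] [Fintype L1] [DecidableEq L1]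
    [Nonempty L1] [Fintype L2] [DecidableEq L2] [Nonempty L2]
    (hp0 : ∀ ω, 0 ≤ p ω) (hp1 : ∑ ω, p ω = 1)
    (hw10 : ∀ v ω, 0 ≤ w1 v ω) (hw11 : ∀ ω, ∑ v, w1 v ω = 1)
    (hw20 : ∀ v ω, 0 ≤ w2 v ω) (hw21 : ∀ ω, ∑ v, w2 v ω = 1)
    (hq1 : ∀ v, q1 v = ∑ ω, p ω * w1 v ω) (hq2 : ∀ v, q2 v = ∑ ω, p ω * w2 v ω)
    (B : Ω → V1 → V2 → Prop) (T : V1 → V2 → Prop) :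
    ∑ ω, p ω * codebookExp q1 (fun C1 : I1 × L1 → V1 => codebookExp q2 fun C2 : I2 × L2 → V2 =>
        ∑ j1, ∑ j2, ((Fintype.card (I1 × L1) : ℝ)⁻¹ * (w1 (C1 j1) ω / q1 (C1 j1))) *
          ((Fintype.card (I2 × L2) : ℝ)⁻¹ * (w2 (C2 j2) ω / q2 (C2 j2))) *
          indic (B ω (binDecoder T C1 C2 j1.1 j2.1).1 (binDecoder T C1 C2 j1.1 j2.1).2)) ≤
      ∑ ω, ∑ v1, ∑ v2, p ω * w1 v1 ω * w2 v2 ω * (indic (B ω v1 v2) + indic (¬ T v1 v2)) +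
      (Fintype.card L1 * Fintype.card L2 - 1) * ∑ v1, ∑ v2, q1 v1 * q2 v2 * indic (T v1 v2) := by
  have hq10 := marginal_nonneg hp0 hw10 hq1
  have hq20 := marginal_nonneg hp0 hw20 hq2
  have hq11 := sum_marginal hp1 hw11 hq1
  have hq21 := sum_marginal hp1 hw21 hq2
  set K1 : ℝ := (Fintype.card (I1 × L1) : ℝ) with hK1
  set K2 : ℝ := (Fintype.card (I2 × L2) : ℝ) with hK2
  have hK1pos : 0 < K1 := by rw [hK1]; exact_mod_cast Fintype.card_pos
  have hK2pos : 0 < K2 := by rw [hK2]; exact_mod_cast Fintype.card_pos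
  have hω : ∀ ω, p ω * codebookExp q1 (fun C1 : I1 × L1 → V1 =>
        codebookExp q2 fun C2 : I2 × L2 → V2 =>
        ∑ j1, ∑ j2, (K1⁻¹ * (w1 (C1 j1) ω / q1 (C1 j1))) *
          (K2⁻¹ * (w2 (C2 j2) ω / q2 (C2 j2))) *
          indic (B ω (binDecoder T C1 C2 j1.1 j2.1).1 (binDecoder T C1 C2 j1.1 j2.1).2)) ≤
      ∑ v1, ∑ v2, p ω * w1 v1 ω * w2 v2 ω * (indic (B ω v1 v2) + indic (¬ T v1 v2)) +
      K1⁻¹ * K2⁻¹ * ∑ j1 : I1 × L1, ∑ j2 : I2 × L2, ∑ l ∈ univ.erase (j1.2, j2.2),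
        p ω * ∑ v1, ∑ v2, (q1 v1 * (if j1 = (j1.1, l.1) then w1 v1 ω / q1 v1 else 1)) *
        (q2 v2 * (if j2 = (j2.1, l.2) then w2 v2 ω / q2 v2 else 1)) * indic (T v1 v2) := by
    intro ω
    by_cases hpω : p ω = 0
    · simp [hpω]
    have hs1 := sum_marginal_mul_div hp0 hw10 hw11 hq1 hpω
    have hs2 := sum_marginal_mul_div hp0 hw20 hw21 hq2 hpω
    have hpt : ∀ (C1 : I1 × L1 → V1) (C2 : I2 × L2 → V2),
        ∑ j1, ∑ j2, (K1⁻¹ * (w1 (C1 j1) ω / q1 (C1 j1))) *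
          (K2⁻¹ * (w2 (C2 j2) ω / q2 (C2 j2))) *
          indic (B ω (binDecoder T C1 C2 j1.1 j2.1).1 (binDecoder T C1 C2 j1.1 j2.1).2) ≤
        K1⁻¹ * K2⁻¹ * ∑ j1, ∑ j2, ((w1 (C1 j1) ω / q1 (C1 j1)) * (w2 (C2 j2) ω / q2 (C2 j2)) *
            (indic (B ω (C1 j1) (C2 j2)) + indic (¬ T (C1 j1) (C2 j2))) +
          ∑ l ∈ univ.erase (j1.2, j2.2), (w1 (C1 j1) ω / q1 (C1 j1)) *
            (w2 (C2 j2) ω / q2 (C2 j2)) * indic (T (C1 (j1.1, l.1)) (C2 (j2.1, l.2)))) := by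
      intro C1 C2
      rw [mul_sum]
      refine sum_le_sum fun j1 _ => ?_
      rw [mul_sum]
      refine sum_le_sum fun j2 _ => ?_
      rw [← mul_sum, ← mul_add]
      have := indic_binDecoder_le T (B ω) C1 C2 j1 j2
      have h0 : 0 ≤ K1⁻¹ * K2⁻¹ * ((w1 (C1 j1) ω / q1 (C1 j1)) * (w2 (C2 j2) ω / q2 (C2 j2))) :=
        mul_nonneg (by positivity) (mul_nonneg (div_nonneg (hw10 _ _) (hq10 _))
          (div_nonneg (hw20 _ _) (hq20 _)))
      calc _ = K1⁻¹ * K2⁻¹ * ((w1 (C1 j1) ω / q1 (C1 j1)) * (w2 (C2 j2) ω / q2 (C2 j2))) *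
            indic (B ω (binDecoder T C1 C2 j1.1 j2.1).1 (binDecoder T C1 C2 j1.1 j2.1).2) := by ring
        _ ≤ _ := mul_le_mul_of_nonneg_left this h0
        _ = _ := by ring
    refine (mul_le_mul_of_nonneg_left (codebookExp_mono hq10 fun C1 =>
      codebookExp_mono hq20 (hpt C1)) (hp0 ω)).trans (le_of_eq ?_)
    simp only [codebookExp_mul_left, codebookExp_sum, codebookExp_add]
    have hmain : ∀ (j1 : I1 × L1) (j2 : I2 × L2),
        codebookExp q1 (fun C1 : I1 × L1 → V1 => codebookExp q2 fun C2 : I2 × L2 → V2 =>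
          (w1 (C1 j1) ω / q1 (C1 j1)) * (w2 (C2 j2) ω / q2 (C2 j2)) *
            (indic (B ω (C1 j1) (C2 j2)) + indic (¬ T (C1 j1) (C2 j2)))) =
        ∑ v1, ∑ v2, (q1 v1 * (w1 v1 ω / q1 v1)) * (q2 v2 * (w2 v2 ω / q2 v2)) *
          (indic (B ω v1 v2) + indic (¬ T v1 v2)) := by
      intro j1 j2
      have := codebookExp_codebookExp_density_mul hq11 hs1 hq21 hs2 j1 j1 j2 j2
        fun v1 v2 => indic (B ω v1 v2) + indic (¬ T v1 v2)
      simpa only [if_true] using this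
    have hcross : ∀ (j1 : I1 × L1) (j2 : I2 × L2) (l : L1 × L2),
        codebookExp q1 (fun C1 : I1 × L1 → V1 => codebookExp q2 fun C2 : I2 × L2 → V2 =>
          (w1 (C1 j1) ω / q1 (C1 j1)) * (w2 (C2 j2) ω / q2 (C2 j2)) *
            indic (T (C1 (j1.1, l.1)) (C2 (j2.1, l.2)))) =
        ∑ v1, ∑ v2, (q1 v1 * (if j1 = (j1.1, l.1) then w1 v1 ω / q1 v1 else 1)) *
        (q2 v2 * (if j2 = (j2.1, l.2) then w2 v2 ω / q2 v2 else 1)) * indic (T v1 v2) :=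
      fun j1 j2 l => codebookExp_codebookExp_density_mul hq11 hs1 hq21 hs2 j1 (j1.1, l.1) j2
        (j2.1, l.2) fun v1 v2 => indic (T v1 v2)
    simp only [hmain, hcross, sum_add_distrib, sum_const, card_univ, nsmul_eq_mul]
    rw [← hK1, ← hK2]
    simp only [← mul_sum (a := p ω)]
    have hfirst : ∑ v1, ∑ v2, p ω * w1 v1 ω * w2 v2 ω * (indic (B ω v1 v2) + indic (¬ T v1 v2)) =
        p ω * ∑ v1, ∑ v2, (q1 v1 * (w1 v1 ω / q1 v1)) * (q2 v2 * (w2 v2 ω / q2 v2)) *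
          (indic (B ω v1 v2) + indic (¬ T v1 v2)) := by
      simp only [mul_sum]
      refine sum_congr rfl fun v1 _ => sum_congr rfl fun v2 _ => ?_
      rw [← mul_assoc, ← mul_assoc, mul_marginal_mul_div hp0 hw10 hq1, mul_right_comm (p ω),
        ← mul_marginal_mul_div hp0 hw20 hq2]
      ring
    rw [hfirst]
    generalize ∑ v1, ∑ v2, (q1 v1 * (w1 v1 ω / q1 v1)) * (q2 v2 * (w2 v2 ω / q2 v2)) *
          (indic (B ω v1 v2) + indic (¬ T v1 v2)) = A
    have halg : ∀ X : ℝ, p ω * (K1⁻¹ * K2⁻¹ * (K1 * (K2 * A) + X)) =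
        p ω * A + K1⁻¹ * K2⁻¹ * (p ω * X) := by
      intro X
      field_simp
    exact halg _
  refine (sum_le_sum fun ω _ => hω ω).trans ?_
  rw [sum_add_distrib]
  refine add_le_add le_rfl (le_of_eq ?_)
  rw [← mul_sum, sum_comm]
  have hin : ∀ (j1 : I1 × L1) (j2 : I2 × L2),
      ∑ ω, ∑ l ∈ univ.erase (j1.2, j2.2),
        p ω * ∑ v1, ∑ v2, (q1 v1 * (if j1 = (j1.1, l.1) then w1 v1 ω / q1 v1 else 1)) *
        (q2 v2 * (if j2 = (j2.1, l.2) then w2 v2 ω / q2 v2 else 1)) * indic (T v1 v2) =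
      (Fintype.card L1 * Fintype.card L2 - 1) *
        ∑ v1, ∑ v2, q1 v1 * q2 v2 * indic (T v1 v2) := by
    intro j1 j2
    have hne : ∀ l ∈ univ.erase (j1.2, j2.2), ¬ (j1 = (j1.1, l.1) ∧ j2 = (j2.1, l.2)) := by
      rintro l hl ⟨h1, h2⟩
      refine (mem_erase.1 hl).1 ?_
      rw [h1, h2]
    rw [sum_comm, sum_congr rfl fun l hl => sum_mul_cross hp0 hp1 hw10 hw20 hq1 hq2
      (j1 = (j1.1, l.1)) (j2 = (j2.1, l.2)) (hne l hl) fun v1 v2 => indic (T v1 v2),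
      sum_const, card_erase_of_mem (mem_univ _), card_univ, nsmul_eq_mul, Fintype.card_prod,
      Nat.cast_sub (Nat.one_le_iff_ne_zero.2 (by simp))]
    push_cast
    ring
  have hin' : ∀ j1 : I1 × L1, ∑ ω, ∑ j2 : I2 × L2, ∑ l ∈ univ.erase (j1.2, j2.2),
        p ω * ∑ v1, ∑ v2, (q1 v1 * (if j1 = (j1.1, l.1) then w1 v1 ω / q1 v1 else 1)) *
        (q2 v2 * (if j2 = (j2.1, l.2) then w2 v2 ω / q2 v2 else 1)) * indic (T v1 v2) =
      K2 * ((Fintype.card L1 * Fintype.card L2 - 1) *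
        ∑ v1, ∑ v2, q1 v1 * q2 v2 * indic (T v1 v2)) := by
    intro j1
    rw [sum_comm, sum_congr rfl fun j2 _ => hin j1 j2, sum_const, card_univ, nsmul_eq_mul]
  rw [sum_congr rfl fun j1 _ => hin' j1, sum_const, card_univ, nsmul_eq_mul, ← hK1]
  field_simp

/-- One-shot distributed coding bound with likelihood encoders and binning. -/
theorem exists_codebooks_failure_le {I1 I2 L1 L2 : Type*} [Fintype I1] [DecidableEq I1]
    [Nonempty I1] [Fintype I2] [DecidableEq I2] [Nonempty I2] [Fintype L1] [DecidableEq L1]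
    [Nonempty L1] [Fintype L2] [DecidableEq L2] [Nonempty L2]
    (hp0 : ∀ ω, 0 ≤ p ω) (hp1 : ∑ ω, p ω = 1)
    (hw10 : ∀ v ω, 0 ≤ w1 v ω) (hw11 : ∀ ω, ∑ v, w1 v ω = 1)
    (hw20 : ∀ v ω, 0 ≤ w2 v ω) (hw21 : ∀ ω, ∑ v, w2 v ω = 1)
    (hq1 : ∀ v, q1 v = ∑ ω, p ω * w1 v ω) (hq2 : ∀ v, q2 v = ∑ ω, p ω * w2 v ω)
    (B : Ω → V1 → V2 → Prop) (T : V1 → V2 → Prop)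
    {t γ1 γ2 : ℝ} (ht : 0 < t) (hγ1 : 0 < γ1) (hγ2 : 0 < γ2) :
    ∃ (C1 : I1 × L1 → V1) (C2 : I2 × L2 → V2) (dec : I1 → I2 → V1 × V2),
      ∑ ω, p ω * ∑ j1, ∑ j2, likelihoodEncoder (fun v => w1 v ω / q1 v) C1 j1 *
          likelihoodEncoder (fun v => w2 v ω / q2 v) C2 j2 *
          indic (B ω (dec j1.1 j2.1).1 (dec j1.1 j2.1).2) ≤
      ∑ ω, ∑ v1, ∑ v2, p ω * w1 v1 ω * w2 v2 ω * (indic (B ω v1 v2) + indic (¬ T v1 v2)) +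
      (Fintype.card L1 * Fintype.card L2 - 1) * ∑ v1, ∑ v2, q1 v1 * q2 v2 * indic (T v1 v2) +
      (t + γ1 / (Fintype.card (I1 × L1) * t) +
        2 * ∑ ω, ∑ v, p ω * w1 v ω * indic (γ1 < w1 v ω / q1 v)) +
      (t + γ2 / (Fintype.card (I2 × L2) * t) +
        2 * ∑ ω, ∑ v, p ω * w2 v ω * indic (γ2 < w2 v ω / q2 v)) := by
  have hq10 := marginal_nonneg hp0 hw10 hq1
  have hq20 := marginal_nonneg hp0 hw20 hq2
  have hq11 := sum_marginal hp1 hw11 hq1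
  have hq21 := sum_marginal hp1 hw21 hq2
  set F : (I1 × L1 → V1) → (I2 × L2 → V2) → ℝ := fun C1 C2 =>
    ∑ ω, p ω * ∑ j1, ∑ j2, likelihoodEncoder (fun v => w1 v ω / q1 v) C1 j1 *
      likelihoodEncoder (fun v => w2 v ω / q2 v) C2 j2 *
      indic (B ω (binDecoder T C1 C2 j1.1 j2.1).1 (binDecoder T C1 C2 j1.1 j2.1).2) with hF
  obtain ⟨C1, hC1⟩ := exists_le_codebookExp hq10 hq11 fun C1 => codebookExp q2 (F C1)
  obtain ⟨C2, hC2⟩ := exists_le_codebookExp hq20 hq21 (F C1)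
  refine ⟨C1, C2, binDecoder T C1 C2, (hC2.trans hC1).trans ?_⟩
  have hswap : codebookExp q1 (fun C1 => codebookExp q2 (F C1)) =
      ∑ ω, p ω * codebookExp q1 (fun C1 : I1 × L1 → V1 =>
        codebookExp q2 fun C2 : I2 × L2 → V2 => ∑ j1, ∑ j2,
        likelihoodEncoder (fun v => w1 v ω / q1 v) C1 j1 *
        likelihoodEncoder (fun v => w2 v ω / q2 v) C2 j2 *
        indic (B ω (binDecoder T C1 C2 j1.1 j2.1).1 (binDecoder T C1 C2 j1.1 j2.1).2)) := by
    simp only [hF, codebookExp_sum, codebookExp_mul_left]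
  rw [hswap]
  set η1 := t + γ1 / (Fintype.card (I1 × L1) * t) with hη1
  set η2 := t + γ2 / (Fintype.card (I2 × L2) * t) with hη2
  have hω : ∀ ω, p ω * codebookExp q1 (fun C1 : I1 × L1 → V1 =>
        codebookExp q2 fun C2 : I2 × L2 → V2 => ∑ j1, ∑ j2,
        likelihoodEncoder (fun v => w1 v ω / q1 v) C1 j1 *
        likelihoodEncoder (fun v => w2 v ω / q2 v) C2 j2 *
        indic (B ω (binDecoder T C1 C2 j1.1 j2.1).1 (binDecoder T C1 C2 j1.1 j2.1).2)) ≤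
      p ω * codebookExp q1 (fun C1 : I1 × L1 → V1 => codebookExp q2 fun C2 : I2 × L2 → V2 =>
        ∑ j1, ∑ j2, ((Fintype.card (I1 × L1) : ℝ)⁻¹ * (w1 (C1 j1) ω / q1 (C1 j1))) *
          ((Fintype.card (I2 × L2) : ℝ)⁻¹ * (w2 (C2 j2) ω / q2 (C2 j2))) *
          indic (B ω (binDecoder T C1 C2 j1.1 j2.1).1 (binDecoder T C1 C2 j1.1 j2.1).2)) +
      (p ω * η1 + 2 * ∑ v, p ω * w1 v ω * indic (γ1 < w1 v ω / q1 v)) +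
      (p ω * η2 + 2 * ∑ v, p ω * w2 v ω * indic (γ2 < w2 v ω / q2 v)) := by
    intro ω
    by_cases hpω : p ω = 0
    · simp [hpω]
    have key := codebookExp_likelihoodEncoder_le (J1 := I1 × L1) (J2 := I2 × L2)
      hq10 hq11 hq20 hq21
      (s1 := fun v => w1 v ω / q1 v) (s2 := fun v => w2 v ω / q2 v)
      (fun v => div_nonneg (hw10 _ _) (hq10 _)) (sum_marginal_mul_div hp0 hw10 hw11 hq1 hpω)
      (fun v => div_nonneg (hw20 _ _) (hq20 _)) (sum_marginal_mul_div hp0 hw20 hw21 hq2 hpω)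
      (fun C1 C2 j1 j2 => indic (B ω (binDecoder T C1 C2 j1.1 j2.1).1
        (binDecoder T C1 C2 j1.1 j2.1).2)) (fun _ _ _ _ => indic_nonneg _)
      (fun _ _ _ _ => indic_le_one _) ht hγ1 hγ2
    rw [← hη1, ← hη2] at key
    have h1 : ∑ v, p ω * w1 v ω * indic (γ1 < w1 v ω / q1 v) =
        p ω * ∑ v, q1 v * (w1 v ω / q1 v) * indic (γ1 < w1 v ω / q1 v) := by
      rw [mul_sum]
      refine sum_congr rfl fun v _ => ?_
      rw [← mul_marginal_mul_div hp0 hw10 hq1, mul_assoc]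
    have h2 : ∑ v, p ω * w2 v ω * indic (γ2 < w2 v ω / q2 v) =
        p ω * ∑ v, q2 v * (w2 v ω / q2 v) * indic (γ2 < w2 v ω / q2 v) := by
      rw [mul_sum]
      refine sum_congr rfl fun v _ => ?_
      rw [← mul_marginal_mul_div hp0 hw20 hq2, mul_assoc]
    rw [h1, h2]
    refine (mul_le_mul_of_nonneg_left key (hp0 ω)).trans (le_of_eq ?_)
    ring
  refine (sum_le_sum fun ω _ => hω ω).trans ?_
  simp only [sum_add_distrib, ← sum_mul, ← mul_sum, hp1, one_mul]
  have := sum_codebookExp_binDecoder_le (I1 := I1) (I2 := I2) (L1 := L1) (L2 := L2)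
    hp0 hp1 hw10 hw11 hw20 hw21 hq1 hq2 B T
  simp only [mul_add, sum_add_distrib] at this ⊢
  linarith

end OneShot

section Concentration

variable {A : Type*} [Fintype A]

lemma exists_pos_sum_mul_exp_lt_one {P : A → ℝ} (hP1 : ∑ a, P a = 1) {f : A → ℝ}
    (hf : ∑ a, P a * f a < 0) : ∃ s > 0, ∑ a, P a * Real.exp (s * f a) < 1 := by
  have hd : HasDerivAt (fun s : ℝ => ∑ a, P a * Real.exp (s * f a)) (∑ a, P a * f a) 0 := by
    have := HasDerivAt.fun_sum (u := univ) (A := fun a (s : ℝ) => P a * Real.exp (s * f a))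
      (A' := fun a => P a * f a) (x := 0) fun a _ => by
        have h := (((hasDerivAt_id (0 : ℝ)).mul_const (f a)).exp).const_mul (P a)
        simpa using h
    exact this
  have hev := (hd.tendsto_slope_zero_right).eventually_lt_const hf
  obtain ⟨s, hs, hs0⟩ := (hev.and self_mem_nhdsWithin).exists
  have hs0' : 0 < s := hs0
  refine ⟨s, hs0', ?_⟩
  simp only [zero_add, zero_mul, Real.exp_zero, mul_one, hP1, smul_eq_mul] at hs
  have := (pos_iff_neg_of_mul_neg hs).1 (inv_pos.2 hs0')
  linarith

/-- Chernoff bound for i.i.d. sums over a finite alphabet. -/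
lemma exists_tail_le_pow {P : A → ℝ} (hP0 : ∀ a, 0 ≤ P a) (hP1 : ∑ a, P a = 1) {f : A → ℝ}
    {c : ℝ} (hf : ∑ a, P a * f a < c) :
    ∃ ρ, 0 ≤ ρ ∧ ρ < 1 ∧ ∀ n : ℕ,
      ∑ a : Fin n → A, (∏ t, P (a t)) * indic (n * c ≤ ∑ t, f (a t)) ≤ ρ ^ n := by
  have hneg : ∑ a, P a * (f a - c) < 0 := by
    simp only [mul_sub, sum_sub_distrib, ← sum_mul, hP1]
    linarith
  obtain ⟨s, hs, hlt⟩ := exists_pos_sum_mul_exp_lt_one hP1 hneg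
  refine ⟨_, sum_nonneg fun a _ => mul_nonneg (hP0 a) (Real.exp_pos _).le, hlt, fun n => ?_⟩
  have hprod : (∑ a, P a * Real.exp (s * (f a - c))) ^ n =
      ∑ a : Fin n → A, ∏ t, P (a t) * Real.exp (s * (f (a t) - c)) := by
    rw [sum_pi_prod_eq (fun (_ : Fin n) a => P a * Real.exp (s * (f a - c)))]
    simp
  rw [hprod]
  refine sum_le_sum fun a _ => ?_
  rw [prod_mul_distrib, ← Real.exp_sum]
  refine mul_le_mul_of_nonneg_left ?_ (prod_nonneg fun _ _ => hP0 _)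
  by_cases h : n * c ≤ ∑ t, f (a t)
  · rw [indic_of h, Real.one_le_exp_iff, ← mul_sum, sum_sub_distrib]
    simp only [sum_const, card_univ, Fintype.card_fin, nsmul_eq_mul]
    exact mul_nonneg hs.le (by linarith)
  · rw [indic_of_not h]
    exact (Real.exp_pos _).le

/-- Chernoff bound for i.i.d. products over a finite alphabet. -/
lemma exists_tail_prod_le_pow {P : A → ℝ} (hP0 : ∀ a, 0 ≤ P a) (hP1 : ∑ a, P a = 1) {g : A → ℝ}
    (hg : ∀ a, P a ≠ 0 → 0 < g a) {c : ℝ} (hc : ∑ a, P a * Real.logb 2 (g a) < c) :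
    ∃ ρ, 0 ≤ ρ ∧ ρ < 1 ∧ ∀ n : ℕ,
      ∑ a : Fin n → A, (∏ t, P (a t)) * indic ((2 : ℝ) ^ (n * c) ≤ ∏ t, g (a t)) ≤ ρ ^ n := by
  obtain ⟨ρ, h0, h1, h⟩ := exists_tail_le_pow hP0 hP1 hc
  refine ⟨ρ, h0, h1, fun n => (sum_le_sum fun a _ => ?_).trans (h n)⟩
  by_cases hz : ∏ t, P (a t) = 0
  · simp [hz]
  refine mul_le_mul_of_nonneg_left (indic_mono fun hle => ?_) (prod_nonneg fun _ _ => hP0 _)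
  have hpos : ∀ t, 0 < g (a t) := fun t => hg _ (prod_ne_zero_iff.1 hz t (mem_univ t))
  rw [← Real.logb_prod univ (fun t => g (a t)) fun t _ => (hpos t).ne',
    Real.le_logb_iff_rpow_le one_lt_two (prod_pos fun t _ => hpos t)]
  exact hle

lemma sum_sum_pi_eq {n : ℕ} {A B : Type*} [Fintype A] [Fintype B] (G : (Fin n → A × B) → ℝ) :
    ∑ x : Fin n → A, ∑ y : Fin n → B, G (fun t => (x t, y t)) = ∑ a, G a := by
  rw [← Fintype.sum_prod_type' fun (x : Fin n → A) (y : Fin n → B) => G fun t => (x t, y t)]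
  exact ((Equiv.arrowProdEquivProdArrow (Fin n) (fun _ => A) fun _ => B).symm).sum_comp G

lemma sum_sum_sum_pi_eq {n : ℕ} {A B C : Type*} [Fintype A] [Fintype B] [Fintype C]
    (G : (Fin n → A × B × C) → ℝ) :
    ∑ x : Fin n → A, ∑ y : Fin n → B, ∑ z : Fin n → C, G (fun t => (x t, y t, z t)) =
      ∑ a, G a := by
  rw [← sum_sum_pi_eq G]
  exact sum_congr rfl fun x _ => sum_sum_pi_eq fun b => G fun t => (x t, b t)

end Concentration

lemma tendsto_two_rpow_nat_mul {x : ℝ} (hx : x < 0) :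
    Filter.Tendsto (fun n : ℕ => (2 : ℝ) ^ (n * x)) Filter.atTop (nhds 0) := by
  have h : ∀ n : ℕ, (2 : ℝ) ^ (n * x) = ((2 : ℝ) ^ x) ^ n := fun n => by
    rw [mul_comm, Real.rpow_mul zero_le_two, Real.rpow_natCast]
  simp_rw [h]
  exact tendsto_pow_atTop_nhds_zero_of_lt_one (by positivity)
    (Real.rpow_lt_one_of_one_lt_of_neg one_lt_two hx)

section Asymptotic

variable {Ω V1 V2 : Type*} [Fintype Ω] [Fintype V1] [Fintype V2]
  {p : Ω → ℝ} {w1 : V1 → Ω → ℝ} {w2 : V2 → Ω → ℝ} {q1 : V1 → ℝ} {q2 : V2 → ℝ}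

lemma sum_triple_eq (F : Ω → V1 → V2 → ℝ) :
    ∑ a : Ω × V1 × V2, F a.1 a.2.1 a.2.2 = ∑ ω, ∑ v1, ∑ v2, F ω v1 v2 := by
  simp only [Fintype.sum_prod_type]

lemma sum_joint_eq_one (hp1 : ∑ ω, p ω = 1) (hw11 : ∀ ω, ∑ v, w1 v ω = 1)
    (hw21 : ∀ ω, ∑ v, w2 v ω = 1) :
    ∑ a : Ω × V1 × V2, p a.1 * w1 a.2.1 a.1 * w2 a.2.2 a.1 = 1 := by
  rw [sum_triple_eq fun ω v1 v2 => p ω * w1 v1 ω * w2 v2 ω]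
  simp only [← mul_sum, hw21, mul_one, hw11, hp1]

lemma sum_pi_joint_eq {n : ℕ} (E : (Fin n → Ω × V1 × V2) → ℝ) :
    ∑ ω : Fin n → Ω, ∑ v1 : Fin n → V1, ∑ v2 : Fin n → V2,
      (∏ t, p (ω t)) * (∏ t, w1 (v1 t) (ω t)) * (∏ t, w2 (v2 t) (ω t)) *
        E (fun t => (ω t, v1 t, v2 t)) =
      ∑ a : Fin n → Ω × V1 × V2,
        (∏ t, p (a t).1 * w1 (a t).2.1 (a t).1 * w2 (a t).2.2 (a t).1) * E a := by
  rw [← sum_sum_sum_pi_eq]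
  simp only [prod_mul_distrib]

/-- Chernoff bound, for sums, under the memoryless extension of `p ω * w1 v1 ω * w2 v2 ω`. -/
lemma exists_joint_tail_le_pow (hp0 : ∀ ω, 0 ≤ p ω) (hp1 : ∑ ω, p ω = 1)
    (hw10 : ∀ v ω, 0 ≤ w1 v ω) (hw11 : ∀ ω, ∑ v, w1 v ω = 1)
    (hw20 : ∀ v ω, 0 ≤ w2 v ω) (hw21 : ∀ ω, ∑ v, w2 v ω = 1)
    {g : Ω → V1 → V2 → ℝ} {c : ℝ}
    (hc : ∑ ω, ∑ v1, ∑ v2, p ω * w1 v1 ω * w2 v2 ω * g ω v1 v2 < c) :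
    ∃ ρ, 0 ≤ ρ ∧ ρ < 1 ∧ ∀ n : ℕ,
      ∑ ω : Fin n → Ω, ∑ v1 : Fin n → V1, ∑ v2 : Fin n → V2,
        (∏ t, p (ω t)) * (∏ t, w1 (v1 t) (ω t)) * (∏ t, w2 (v2 t) (ω t)) *
          indic (n * c ≤ ∑ t, g (ω t) (v1 t) (v2 t)) ≤ ρ ^ n := by
  rw [← sum_triple_eq fun ω v1 v2 => p ω * w1 v1 ω * w2 v2 ω * g ω v1 v2] at hc
  obtain ⟨ρ, h0, h1, h⟩ := exists_tail_le_pow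
    (P := fun a : Ω × V1 × V2 => p a.1 * w1 a.2.1 a.1 * w2 a.2.2 a.1)
    (fun a => mul_nonneg (mul_nonneg (hp0 _) (hw10 _ _)) (hw20 _ _))
    (sum_joint_eq_one hp1 hw11 hw21) (f := fun a => g a.1 a.2.1 a.2.2) hc
  refine ⟨ρ, h0, h1, fun n => ?_⟩
  rw [sum_pi_joint_eq fun a => indic (n * c ≤ ∑ t, g (a t).1 (a t).2.1 (a t).2.2)]
  exact h n

/-- Chernoff bound, for products, under the memoryless extension of
`p ω * w1 v1 ω * w2 v2 ω`. -/
lemma exists_joint_tail_prod_le_pow (hp0 : ∀ ω, 0 ≤ p ω) (hp1 : ∑ ω, p ω = 1)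
    (hw10 : ∀ v ω, 0 ≤ w1 v ω) (hw11 : ∀ ω, ∑ v, w1 v ω = 1)
    (hw20 : ∀ v ω, 0 ≤ w2 v ω) (hw21 : ∀ ω, ∑ v, w2 v ω = 1)
    {g : Ω → V1 → V2 → ℝ} (hg : ∀ ω v1 v2, p ω * w1 v1 ω * w2 v2 ω ≠ 0 → 0 < g ω v1 v2) {c : ℝ}
    (hc : ∑ ω, ∑ v1, ∑ v2, p ω * w1 v1 ω * w2 v2 ω * Real.logb 2 (g ω v1 v2) < c) :
    ∃ ρ, 0 ≤ ρ ∧ ρ < 1 ∧ ∀ n : ℕ,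
      ∑ ω : Fin n → Ω, ∑ v1 : Fin n → V1, ∑ v2 : Fin n → V2,
        (∏ t, p (ω t)) * (∏ t, w1 (v1 t) (ω t)) * (∏ t, w2 (v2 t) (ω t)) *
          indic ((2 : ℝ) ^ (n * c) ≤ ∏ t, g (ω t) (v1 t) (v2 t)) ≤ ρ ^ n := by
  rw [← sum_triple_eq fun ω v1 v2 => p ω * w1 v1 ω * w2 v2 ω * Real.logb 2 (g ω v1 v2)] at hc
  obtain ⟨ρ, h0, h1, h⟩ := exists_tail_prod_le_pow
    (P := fun a : Ω × V1 × V2 => p a.1 * w1 a.2.1 a.1 * w2 a.2.2 a.1)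
    (fun a => mul_nonneg (mul_nonneg (hp0 _) (hw10 _ _)) (hw20 _ _))
    (sum_joint_eq_one hp1 hw11 hw21) (g := fun a => g a.1 a.2.1 a.2.2) (fun a => hg _ _ _) hc
  refine ⟨ρ, h0, h1, fun n => ?_⟩
  rw [sum_pi_joint_eq fun a => indic ((2 : ℝ) ^ (n * c) ≤ ∏ t, g (a t).1 (a t).2.1 (a t).2.2)]
  exact h n

/-- Under the product of the marginals the density test is passed with small probability. -/
lemma sum_product_density_test_le {q12 : V1 → V2 → ℝ} (hq10 : ∀ v, 0 ≤ q1 v)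
    (hq20 : ∀ v, 0 ≤ q2 v) (hq120 : ∀ v1 v2, 0 ≤ q12 v1 v2) (hq121 : ∑ v1, ∑ v2, q12 v1 v2 = 1)
    (n : ℕ) {β : ℝ} (hβ : 0 < β) :
    ∑ v1 : Fin n → V1, ∑ v2 : Fin n → V2, (∏ t, q1 (v1 t)) * (∏ t, q2 (v2 t)) *
      indic (β < ∏ t, q12 (v1 t) (v2 t) / (q1 (v1 t) * q2 (v2 t))) ≤ β⁻¹ := by
  have hone : ∑ v1 : Fin n → V1, ∑ v2 : Fin n → V2, ∏ t, q12 (v1 t) (v2 t) = 1 := by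
    rw [sum_sum_pi_eq fun a : Fin n → V1 × V2 => ∏ t, q12 (a t).1 (a t).2,
      sum_pi_prod_eq fun (_ : Fin n) (a : V1 × V2) => q12 a.1 a.2]
    simp [Fintype.sum_prod_type, hq121]
  calc _ ≤ ∑ v1 : Fin n → V1, ∑ v2 : Fin n → V2, β⁻¹ * ∏ t, q12 (v1 t) (v2 t) := by
        refine sum_le_sum fun v1 _ => sum_le_sum fun v2 _ => ?_
        set i := ∏ t, q12 (v1 t) (v2 t) / (q1 (v1 t) * q2 (v2 t)) with hi
        have hi0 : 0 ≤ i := prod_nonneg fun t _ =>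
          div_nonneg (hq120 _ _) (mul_nonneg (hq10 _) (hq20 _))
        have hind : indic (β < i) ≤ β⁻¹ * i := by
          by_cases h : β < i
          · rw [indic_of h, inv_mul_eq_div, one_le_div hβ]
            exact h.le
          · rw [indic_of_not h]
            positivity
        have hle : (∏ t, q1 (v1 t)) * (∏ t, q2 (v2 t)) * i ≤ ∏ t, q12 (v1 t) (v2 t) := by
          rw [hi, ← prod_mul_distrib, ← prod_mul_distrib]
          refine prod_le_prod (fun t _ => mul_nonneg (mul_nonneg (hq10 _) (hq20 _))
            (div_nonneg (hq120 _ _) (mul_nonneg (hq10 _) (hq20 _)))) fun t _ => ?_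
          by_cases h : q1 (v1 t) * q2 (v2 t) = 0
          · rw [h, zero_mul]
            exact hq120 _ _
          · rw [mul_div_cancel₀ _ h]
        calc _ ≤ (∏ t, q1 (v1 t)) * (∏ t, q2 (v2 t)) * (β⁻¹ * i) :=
              mul_le_mul_of_nonneg_left hind (mul_nonneg (prod_nonneg fun _ _ => hq10 _)
                (prod_nonneg fun _ _ => hq20 _))
          _ = β⁻¹ * ((∏ t, q1 (v1 t)) * (∏ t, q2 (v2 t)) * i) := by ring
          _ ≤ _ := mul_le_mul_of_nonneg_left hle (by positivity)
    _ = β⁻¹ := by simp only [← mul_sum, hone, mul_one]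

lemma half_rpow_le_floor {x : ℝ} (hx : 0 ≤ x) : (2 : ℝ) ^ x / 2 ≤ (⌊(2 : ℝ) ^ x⌋₊ : ℝ) := by
  have h1 : 1 ≤ (2 : ℝ) ^ x := Real.one_le_rpow one_le_two hx
  have h2 : (1 : ℝ) ≤ ⌊(2 : ℝ) ^ x⌋₊ := by exact_mod_cast Nat.one_le_floor_iff _ |>.2 h1
  have h3 := Nat.lt_floor_add_one ((2 : ℝ) ^ x)
  linarith

lemma rpow_div_card_le {n M L : ℕ} {c R ρ t : ℝ} (ht : 0 < t) (hM : (2 : ℝ) ^ (n * R) ≤ M)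
    (hL : (2 : ℝ) ^ (n * ρ) / 2 ≤ L) :
    (2 : ℝ) ^ (n * c) / ((Fintype.card (Fin M × Fin L) : ℝ) * t) ≤
      2 / t * (2 : ℝ) ^ (n * (c - (R + ρ))) := by
  have hcard : (Fintype.card (Fin M × Fin L) : ℝ) = M * L := by simp
  have hpR : 0 < (2 : ℝ) ^ (n * R) := by positivity
  have hpρ : 0 < (2 : ℝ) ^ (n * ρ) := by positivity
  rw [hcard]
  calc (2 : ℝ) ^ (n * c) / ((M * L : ℝ) * t)
      ≤ (2 : ℝ) ^ (n * c) / (((2 : ℝ) ^ (n * R) * ((2 : ℝ) ^ (n * ρ) / 2)) * t) := by gcongr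
    _ = 2 / t * (2 : ℝ) ^ (n * (c - (R + ρ))) := by
        rw [show (n : ℝ) * (c - (R + ρ)) = n * c - (n * R + n * ρ) by ring,
          Real.rpow_sub two_pos, Real.rpow_add two_pos]
        field_simp

end Asymptotic

lemma marginal_pos {Ω V : Type*} [Fintype Ω] {p : Ω → ℝ} {w : V → Ω → ℝ} {q : V → ℝ}
    (hp0 : ∀ ω, 0 ≤ p ω) (hw0 : ∀ v ω, 0 ≤ w v ω)
    (hq : ∀ v, q v = ∑ ω, p ω * w v ω) {v : V} {ω : Ω} (h : p ω * w v ω ≠ 0) :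
    0 < q v := by
  rw [hq]
  exact sum_pos' (fun ω _ => mul_nonneg (hp0 ω) (hw0 v ω))
    ⟨ω, mem_univ ω, lt_of_le_of_ne (mul_nonneg (hp0 ω) (hw0 v ω)) (Ne.symm h)⟩

section AsymptoticCode

variable {Ω V1 V2 : Type*} [Fintype Ω] [Fintype V1] [Fintype V2]
  {p : Ω → ℝ} {w1 : V1 → Ω → ℝ} {w2 : V2 → Ω → ℝ} {q1 : V1 → ℝ} {q2 : V2 → ℝ}

/-- Achievability for memoryless extensions: if the codebook rates `R + ρ` exceed the covering
rates and the bin rates `ρ` are below the packing rate, then the probability that the decoded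
codewords violate one of two empirical constraints vanishes. -/
theorem eventually_exists_codebooks_failure_le
    (hp0 : ∀ ω, 0 ≤ p ω) (hp1 : ∑ ω, p ω = 1)
    (hw10 : ∀ v ω, 0 ≤ w1 v ω) (hw11 : ∀ ω, ∑ v, w1 v ω = 1)
    (hw20 : ∀ v ω, 0 ≤ w2 v ω) (hw21 : ∀ ω, ∑ v, w2 v ω = 1)
    (hq1 : ∀ v, q1 v = ∑ ω, p ω * w1 v ω) (hq2 : ∀ v, q2 v = ∑ ω, p ω * w2 v ω)
    {q12 : V1 → V2 → ℝ} (hq12 : ∀ v1 v2, q12 v1 v2 = ∑ ω, p ω * w1 v1 ω * w2 v2 ω)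
    {g1 g2 : Ω → V1 → V2 → ℝ} {c1 c2 : ℝ}
    (hc1 : ∑ ω, ∑ v1, ∑ v2, p ω * w1 v1 ω * w2 v2 ω * g1 ω v1 v2 < c1)
    (hc2 : ∑ ω, ∑ v1, ∑ v2, p ω * w1 v1 ω * w2 v2 ω * g2 ω v1 v2 < c2)
    {R1 R2 ρ1 ρ2 : ℝ} (hρ1 : 0 ≤ ρ1) (hρ2 : 0 ≤ ρ2)
    (hR1 : ∑ ω, ∑ v1, ∑ v2, p ω * w1 v1 ω * w2 v2 ω * Real.logb 2 (w1 v1 ω / q1 v1) < R1 + ρ1)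
    (hR2 : ∑ ω, ∑ v1, ∑ v2, p ω * w1 v1 ω * w2 v2 ω * Real.logb 2 (w2 v2 ω / q2 v2) < R2 + ρ2)
    (hρ : (ρ1 = 0 ∧ ρ2 = 0) ∨ ρ1 + ρ2 < ∑ ω, ∑ v1, ∑ v2,
      p ω * w1 v1 ω * w2 v2 ω * Real.logb 2 (q12 v1 v2 / (q1 v1 * q2 v2)))
    {ε : ℝ} (hε : 0 < ε) :
    ∀ᶠ n : ℕ in Filter.atTop, ∃ (L1 L2 : ℕ)
      (C1 : Fin ⌈(2 : ℝ) ^ (n * R1)⌉₊ × Fin L1 → Fin n → V1)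
      (C2 : Fin ⌈(2 : ℝ) ^ (n * R2)⌉₊ × Fin L2 → Fin n → V2)
      (dec : Fin ⌈(2 : ℝ) ^ (n * R1)⌉₊ → Fin ⌈(2 : ℝ) ^ (n * R2)⌉₊ →
        (Fin n → V1) × (Fin n → V2)), 0 < L1 ∧ 0 < L2 ∧
      ∑ ω : Fin n → Ω, (∏ t, p (ω t)) * ∑ j1, ∑ j2,
        likelihoodEncoder (fun v => (∏ t, w1 (v t) (ω t)) / ∏ t, q1 (v t)) C1 j1 *
        likelihoodEncoder (fun v => (∏ t, w2 (v t) (ω t)) / ∏ t, q2 (v t)) C2 j2 *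
        indic (n * c1 ≤ ∑ t, g1 (ω t) ((dec j1.1 j2.1).1 t) ((dec j1.1 j2.1).2 t) ∨
          n * c2 ≤ ∑ t, g2 (ω t) ((dec j1.1 j2.1).1 t) ((dec j1.1 j2.1).2 t)) ≤ ε := by
  have hq10 := marginal_nonneg hp0 hw10 hq1
  have hq20 := marginal_nonneg hp0 hw20 hq2
  have hPnn : ∀ ω v1 v2, 0 ≤ p ω * w1 v1 ω * w2 v2 ω := fun ω v1 v2 =>
    mul_nonneg (mul_nonneg (hp0 _) (hw10 _ _)) (hw20 _ _)
  have hq120 : ∀ v1 v2, 0 ≤ q12 v1 v2 := fun v1 v2 => by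
    rw [hq12]; exact sum_nonneg fun ω _ => hPnn ω v1 v2
  have hq121 : ∑ v1, ∑ v2, q12 v1 v2 = 1 := by
    rw [← sum_joint_eq_one hp1 hw11 hw21, sum_triple_eq fun ω v1 v2 => p ω * w1 v1 ω * w2 v2 ω]
    simp_rw [hq12]
    rw [sum_comm]
    simp_rw [sum_comm (s := (univ : Finset V1)) (t := (univ : Finset Ω))]
    rw [sum_comm]
    exact sum_congr rfl fun ω _ => sum_comm
  have hpos1 : ∀ ω v1 v2, p ω * w1 v1 ω * w2 v2 ω ≠ 0 → 0 < w1 v1 ω / q1 v1 :=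
    fun ω v1 v2 h => div_pos
      (lt_of_le_of_ne (hw10 _ _) (Ne.symm (right_ne_zero_of_mul (left_ne_zero_of_mul h))))
      (marginal_pos hp0 hw10 hq1 (left_ne_zero_of_mul h))
  have hpos2 : ∀ ω v1 v2, p ω * w1 v1 ω * w2 v2 ω ≠ 0 → 0 < w2 v2 ω / q2 v2 :=
    fun ω v1 v2 h => div_pos (lt_of_le_of_ne (hw20 _ _) (Ne.symm (right_ne_zero_of_mul h)))
      (marginal_pos hp0 hw20 hq2
        (mul_ne_zero (left_ne_zero_of_mul (left_ne_zero_of_mul h)) (right_ne_zero_of_mul h)))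
  have hpos12 : ∀ ω v1 v2, p ω * w1 v1 ω * w2 v2 ω ≠ 0 →
      0 < q12 v1 v2 / (q1 v1 * q2 v2) := by
    intro ω v1 v2 h
    refine div_pos ?_ (mul_pos (marginal_pos hp0 hw10 hq1 (left_ne_zero_of_mul h))
      (marginal_pos hp0 hw20 hq2
        (mul_ne_zero (left_ne_zero_of_mul (left_ne_zero_of_mul h)) (right_ne_zero_of_mul h))))
    rw [hq12]
    exact sum_pos' (fun ω _ => hPnn ω v1 v2)
      ⟨ω, mem_univ ω, lt_of_le_of_ne (hPnn ω v1 v2) (Ne.symm h)⟩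
  obtain ⟨b1, hb10, hb11, hb1⟩ := exists_joint_tail_le_pow hp0 hp1 hw10 hw11 hw20 hw21 hc1
  obtain ⟨b2, hb20, hb21, hb2⟩ := exists_joint_tail_le_pow hp0 hp1 hw10 hw11 hw20 hw21 hc2
  obtain ⟨r1, hr1, hr1'⟩ := exists_between hR1
  obtain ⟨r2, hr2, hr2'⟩ := exists_between hR2
  obtain ⟨a1, ha10, ha11, ha1⟩ := exists_joint_tail_prod_le_pow hp0 hp1 hw10 hw11 hw20 hw21
    hpos1 hr1
  obtain ⟨a2, ha20, ha21, ha2⟩ := exists_joint_tail_prod_le_pow hp0 hp1 hw10 hw11 hw20 hw21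
    hpos2 hr2
  obtain ⟨r, hr, hr'⟩ : ∃ r, r < ∑ ω, ∑ v1, ∑ v2,
      p ω * w1 v1 ω * w2 v2 ω * Real.logb 2 (q12 v1 v2 / (q1 v1 * q2 v2)) ∧
      ((ρ1 = 0 ∧ ρ2 = 0) ∨ ρ1 + ρ2 < r) := by
    rcases hρ with h | h
    · obtain ⟨r, hr⟩ := exists_lt (∑ ω, ∑ v1, ∑ v2,
        p ω * w1 v1 ω * w2 v2 ω * Real.logb 2 (q12 v1 v2 / (q1 v1 * q2 v2)))
      exact ⟨r, hr, Or.inl h⟩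
    · obtain ⟨r, hr, hr'⟩ := exists_between h
      exact ⟨r, hr', Or.inr hr⟩
  obtain ⟨a, ha0, ha1', ha⟩ := exists_joint_tail_prod_le_pow hp0 hp1 hw10 hw11 hw20 hw21
    (g := fun _ v1 v2 => (q12 v1 v2 / (q1 v1 * q2 v2))⁻¹) (c := -r)
    (fun ω v1 v2 h => inv_pos.2 (hpos12 ω v1 v2 h)) (by
      simp only [Real.logb_inv, mul_neg, sum_neg_distrib]
      linarith)
  obtain ⟨S, hS, hSle⟩ : ∃ S : ℕ → ℝ, Filter.Tendsto S Filter.atTop (nhds 0) ∧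
      ∀ n : ℕ, ((⌊(2 : ℝ) ^ (n * ρ1)⌋₊ : ℝ) * ⌊(2 : ℝ) ^ (n * ρ2)⌋₊ - 1) *
        ((2 : ℝ) ^ (n * r))⁻¹ ≤ S n := by
    rcases hr' with ⟨h1, h2⟩ | h
    · exact ⟨0, tendsto_const_nhds, fun n => by simp [h1, h2]⟩
    · refine ⟨_, tendsto_two_rpow_nat_mul (sub_neg.2 h), fun n => ?_⟩
      have hf1 := Nat.floor_le (Real.rpow_nonneg zero_le_two ((n : ℝ) * ρ1))
      have hf2 := Nat.floor_le (Real.rpow_nonneg zero_le_two ((n : ℝ) * ρ2))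
      have hprod : ((⌊(2 : ℝ) ^ (n * ρ1)⌋₊ : ℝ) * ⌊(2 : ℝ) ^ (n * ρ2)⌋₊ - 1) ≤
          (2 : ℝ) ^ (n * ρ1) * (2 : ℝ) ^ (n * ρ2) := by
        have := mul_le_mul hf1 hf2 (by positivity) (by positivity)
        linarith
      rw [mul_sub, Real.rpow_sub two_pos, mul_add, Real.rpow_add two_pos, div_eq_mul_inv]
      gcongr
  set t := ε / 4 with ht
  have ht0 : 0 < t := by positivity
  have hlim : Filter.Tendsto (fun n : ℕ => b1 ^ n + b2 ^ n + a ^ n + S n +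
      (t + 2 / t * (2 : ℝ) ^ (n * (r1 - (R1 + ρ1))) + 2 * a1 ^ n) +
      (t + 2 / t * (2 : ℝ) ^ (n * (r2 - (R2 + ρ2))) + 2 * a2 ^ n)) Filter.atTop
      (nhds (0 + 0 + 0 + 0 + (t + 2 / t * 0 + 2 * 0) + (t + 2 / t * 0 + 2 * 0))) := by
    have hpw : ∀ {x : ℝ}, 0 ≤ x → x < 1 →
        Filter.Tendsto (fun n : ℕ => x ^ n) Filter.atTop (nhds 0) :=
      fun h h' => tendsto_pow_atTop_nhds_zero_of_lt_one h h'
    exact ((((hpw hb10 hb11).add (hpw hb20 hb21)).add (hpw ha0 ha1')).add hS).add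
      ((tendsto_const_nhds.add ((tendsto_two_rpow_nat_mul (sub_neg.2 hr1')).const_mul _)).add
        ((hpw ha10 ha11).const_mul _)) |>.add
      ((tendsto_const_nhds.add ((tendsto_two_rpow_nat_mul (sub_neg.2 hr2')).const_mul _)).add
        ((hpw ha20 ha21).const_mul _))
  filter_upwards [hlim.eventually_lt_const (u := ε) (by rw [ht]; linarith)] with n hn
  have hnρ1 : 0 ≤ (n : ℝ) * ρ1 := by positivity
  have hnρ2 : 0 ≤ (n : ℝ) * ρ2 := by positivity
  have hL1 : 0 < ⌊(2 : ℝ) ^ (n * ρ1)⌋₊ := Nat.floor_pos.2 (Real.one_le_rpow one_le_two hnρ1)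
  have hL2 : 0 < ⌊(2 : ℝ) ^ (n * ρ2)⌋₊ := Nat.floor_pos.2 (Real.one_le_rpow one_le_two hnρ2)
  have : Nonempty (Fin ⌈(2 : ℝ) ^ (n * R1)⌉₊) := ⟨⟨0, Nat.ceil_pos.2 (by positivity)⟩⟩
  have : Nonempty (Fin ⌈(2 : ℝ) ^ (n * R2)⌉₊) := ⟨⟨0, Nat.ceil_pos.2 (by positivity)⟩⟩
  have : Nonempty (Fin ⌊(2 : ℝ) ^ (n * ρ1)⌋₊) := ⟨⟨0, hL1⟩⟩
  have : Nonempty (Fin ⌊(2 : ℝ) ^ (n * ρ2)⌋₊) := ⟨⟨0, hL2⟩⟩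
  have hw11n : ∀ ω : Fin n → Ω, ∑ v : Fin n → V1, ∏ t, w1 (v t) (ω t) = 1 := fun ω => by
    rw [sum_pi_prod_eq fun t v => w1 v (ω t)]; simp [hw11]
  have hw21n : ∀ ω : Fin n → Ω, ∑ v : Fin n → V2, ∏ t, w2 (v t) (ω t) = 1 := fun ω => by
    rw [sum_pi_prod_eq fun t v => w2 v (ω t)]; simp [hw21]
  obtain ⟨C1, C2, dec, hdec⟩ := exists_codebooks_failure_le
    (I1 := Fin ⌈(2 : ℝ) ^ (n * R1)⌉₊) (I2 := Fin ⌈(2 : ℝ) ^ (n * R2)⌉₊)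
    (L1 := Fin ⌊(2 : ℝ) ^ (n * ρ1)⌋₊) (L2 := Fin ⌊(2 : ℝ) ^ (n * ρ2)⌋₊)
    (p := fun ω : Fin n → Ω => ∏ t, p (ω t))
    (w1 := fun (v : Fin n → V1) ω => ∏ t, w1 (v t) (ω t))
    (w2 := fun (v : Fin n → V2) ω => ∏ t, w2 (v t) (ω t))
    (q1 := fun v => ∏ t, q1 (v t)) (q2 := fun v => ∏ t, q2 (v t))
    (fun ω => prod_nonneg fun _ _ => hp0 _)
    (by rw [sum_pi_prod_eq fun (_ : Fin n) ω => p ω]; simp [hp1])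
    (fun v ω => prod_nonneg fun _ _ => hw10 _ _) hw11n
    (fun v ω => prod_nonneg fun _ _ => hw20 _ _) hw21n
    (fun v => by
      simp only [← prod_mul_distrib]
      rw [sum_pi_prod_eq fun t ω => p ω * w1 (v t) ω]
      simp only [hq1])
    (fun v => by
      simp only [← prod_mul_distrib]
      rw [sum_pi_prod_eq fun t ω => p ω * w2 (v t) ω]
      simp only [hq2])
    (fun ω v1 v2 => n * c1 ≤ ∑ t, g1 (ω t) (v1 t) (v2 t) ∨ n * c2 ≤ ∑ t, g2 (ω t) (v1 t) (v2 t))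
    (fun v1 v2 => (2 : ℝ) ^ (n * r) < ∏ t, q12 (v1 t) (v2 t) / (q1 (v1 t) * q2 (v2 t)))
    ht0 (γ1 := (2 : ℝ) ^ (n * r1)) (γ2 := (2 : ℝ) ^ (n * r2)) (by positivity) (by positivity)
  refine ⟨_, _, C1, C2, dec, hL1, hL2, hdec.trans (le_trans ?_ hn.le)⟩
  have hnn : ∀ (ω : Fin n → Ω) (v1 : Fin n → V1) (v2 : Fin n → V2),
      0 ≤ (∏ t, p (ω t)) * (∏ t, w1 (v1 t) (ω t)) * (∏ t, w2 (v2 t) (ω t)) := fun ω v1 v2 =>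
    mul_nonneg (mul_nonneg (prod_nonneg fun _ _ => hp0 _) (prod_nonneg fun _ _ => hw10 _ _))
      (prod_nonneg fun _ _ => hw20 _ _)
  refine add_le_add (add_le_add (add_le_add ?_ ?_) ?_) ?_
  · have hb := add_le_add (add_le_add (hb1 n) (hb2 n)) (ha n)
    refine le_trans ?_ hb
    simp only [← sum_add_distrib, ← mul_add]
    refine sum_le_sum fun ω _ => sum_le_sum fun v1 _ => sum_le_sum fun v2 _ => ?_
    rcases eq_or_ne ((∏ t, p (ω t)) * (∏ t, w1 (v1 t) (ω t)) * (∏ t, w2 (v2 t) (ω t))) 0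
      with h0 | h0
    · rw [h0, zero_mul, zero_mul]
    refine mul_le_mul_of_nonneg_left (add_le_add ?_ (indic_mono fun h => ?_)) (hnn ω v1 v2)
    · by_cases h1 : n * c1 ≤ ∑ t, g1 (ω t) (v1 t) (v2 t)
      · rw [indic_of h1]
        linarith [indic_le_one (n * c1 ≤ ∑ t, g1 (ω t) (v1 t) (v2 t) ∨
          n * c2 ≤ ∑ t, g2 (ω t) (v1 t) (v2 t)),
          indic_nonneg (n * c2 ≤ ∑ t, g2 (ω t) (v1 t) (v2 t))]
      · rw [indic_of_not h1, zero_add]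
        exact indic_mono fun h => h.resolve_left h1
    · rw [← prod_mul_distrib, ← prod_mul_distrib, prod_ne_zero_iff] at h0
      rw [prod_inv_distrib, mul_neg, Real.rpow_neg zero_le_two]
      exact inv_anti₀ (prod_pos fun t _ => hpos12 _ _ _ (h0 t (mem_univ t))) (not_lt.1 h)
  · refine le_trans ?_ (hSle n)
    rw [Fintype.card_fin, Fintype.card_fin]
    refine mul_le_mul_of_nonneg_left (sum_product_density_test_le hq10 hq20 hq120 hq121 n
      (by positivity)) (sub_nonneg.2 ?_)
    have h1 : (1 : ℝ) ≤ ⌊(2 : ℝ) ^ (n * ρ1)⌋₊ := by exact_mod_cast hL1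
    have h2 : (1 : ℝ) ≤ ⌊(2 : ℝ) ^ (n * ρ2)⌋₊ := by exact_mod_cast hL2
    nlinarith
  · refine add_le_add (add_le_add le_rfl (rpow_div_card_le ht0 (Nat.le_ceil _)
      (half_rpow_le_floor hnρ1))) (mul_le_mul_of_nonneg_left (le_trans ?_ (ha1 n)) zero_le_two)
    refine sum_le_sum fun ω _ => sum_le_sum fun v1 _ => ?_
    rw [← sum_mul, ← mul_sum, hw21n, mul_one]
    refine mul_le_mul_of_nonneg_left (indic_mono fun h => ?_)
      (mul_nonneg (prod_nonneg fun _ _ => hp0 _) (prod_nonneg fun _ _ => hw10 _ _))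
    rw [prod_div_distrib]
    exact h.le
  · refine add_le_add (add_le_add le_rfl (rpow_div_card_le ht0 (Nat.le_ceil _)
      (half_rpow_le_floor hnρ2))) (mul_le_mul_of_nonneg_left (le_trans ?_ (ha2 n)) zero_le_two)
    refine sum_le_sum fun ω _ => ?_
    rw [sum_comm]
    refine sum_le_sum fun v2 _ => ?_
    rw [← sum_mul, ← sum_mul, ← mul_sum, hw11n, mul_one]
    refine mul_le_mul_of_nonneg_left (indic_mono fun h => ?_)
      (mul_nonneg (prod_nonneg fun _ _ => hp0 _) (prod_nonneg fun _ _ => hw20 _ _))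
    rw [prod_div_distrib]
    exact h.le

end AsymptoticCode

section InformationIdentities

/-- For a Markov chain `U - A - B - V`, the conditional mutual information `I(A; U | V)` is the
expected difference of the information densities of `(A, U)` and `(U, V)`. -/
lemma condMutInf_markov_eq {A B U V : Type*} [Fintype A] [Fintype B] [Fintype U] [Fintype V]
    {P : A → B → ℝ} {w : U → A → ℝ} {z : V → B → ℝ} {q1 : U → ℝ} {q2 : V → ℝ} {q12 : U → V → ℝ}
    (hP0 : ∀ a b, 0 ≤ P a b) (hw0 : ∀ u a, 0 ≤ w u a) (hw1 : ∀ a, ∑ u, w u a = 1)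
    (hz0 : ∀ v b, 0 ≤ z v b)
    (hq1 : ∀ u, q1 u = ∑ a, ∑ b, P a b * w u a) (hq2 : ∀ v, q2 v = ∑ a, ∑ b, P a b * z v b)
    (hq12 : ∀ u v, q12 u v = ∑ a, ∑ b, P a b * w u a * z v b) :
    condMutInf (fun a u v => ∑ b, P a b * w u a * z v b) =
      ∑ a, ∑ b, ∑ u, ∑ v, P a b * w u a * z v b *
        (Real.logb 2 (w u a / q1 u) - Real.logb 2 (q12 u v / (q1 u * q2 v))) := by
  have hfac : ∀ a u v, ∑ b, P a b * w u a * z v b = w u a * ∑ b, P a b * z v b := by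
    intro a u v
    rw [mul_sum]
    exact sum_congr rfl fun b _ => by ring
  have hsum : ∀ a v, ∑ u, ∑ b, P a b * w u a * z v b = ∑ b, P a b * z v b := by
    intro a v
    simp_rw [hfac, ← sum_mul, hw1, one_mul]
  unfold condMutInf
  refine sum_congr rfl fun a _ => ?_
  refine Eq.trans (sum_congr rfl fun u _ => Eq.trans (sum_congr rfl fun v _ => ?_) sum_comm)
    sum_comm
  simp only [hsum]
  rw [← hq12, ← hq2, ← sum_mul]
  rcases eq_or_ne (∑ b, P a b * w u a * z v b) 0 with h | h
  · rw [h, zero_mul, zero_mul]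
  congr 1
  have hs0 : ∀ a v, 0 ≤ ∑ b, P a b * z v b := fun a v =>
    sum_nonneg fun b _ => mul_nonneg (hP0 a b) (hz0 v b)
  rw [hfac] at h ⊢
  have hw := left_ne_zero_of_mul h
  have hs := right_ne_zero_of_mul h
  have hq12' : q12 u v ≠ 0 := by
    rw [hq12]
    simp_rw [hfac]
    exact (sum_pos' (fun a _ => mul_nonneg (hw0 u a) (hs0 a v))
      ⟨a, mem_univ a, lt_of_le_of_ne (mul_nonneg (hw0 u a) (hs0 a v)) (Ne.symm h)⟩).ne'
  have hq2' : q2 v ≠ 0 := by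
    rw [hq2]
    exact (sum_pos' (fun a _ => hs0 a v)
      ⟨a, mem_univ a, lt_of_le_of_ne (hs0 a v) (Ne.symm hs)⟩).ne'
  have hq1' : q1 u ≠ 0 := by
    obtain ⟨b, -, hb⟩ := exists_ne_zero_of_sum_ne_zero hs
    have hnn : ∀ a, 0 ≤ ∑ b, P a b * w u a := fun a =>
      sum_nonneg fun b _ => mul_nonneg (hP0 a b) (hw0 u a)
    rw [hq1]
    refine (sum_pos' (fun a _ => hnn a) ⟨a, mem_univ a, sum_pos'
      (fun b _ => mul_nonneg (hP0 a b) (hw0 u a)) ⟨b, mem_univ b, ?_⟩⟩).ne'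
    exact lt_of_le_of_ne (mul_nonneg (hP0 a b) (hw0 u a))
      (mul_ne_zero (left_ne_zero_of_mul hb) hw).symm
  rw [← Real.logb_div (div_ne_zero hw hq1') (div_ne_zero hq12' (mul_ne_zero hq1' hq2'))]
  congr 1
  field_simp

/-- The mutual information `I(Ω; U, V)` when `U` and `V` are conditionally independent given `Ω`,
as an expected sum of information densities. -/
lemma mutInf_prod_eq {Ω U V : Type*} [Fintype Ω] [Fintype U] [Fintype V]
    {p : Ω → ℝ} {w1 : U → Ω → ℝ} {w2 : V → Ω → ℝ} {q1 : U → ℝ} {q2 : V → ℝ} {q12 : U → V → ℝ}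
    (hp0 : ∀ ω, 0 ≤ p ω) (hw10 : ∀ u ω, 0 ≤ w1 u ω) (hw11 : ∀ ω, ∑ u, w1 u ω = 1)
    (hw20 : ∀ v ω, 0 ≤ w2 v ω) (hw21 : ∀ ω, ∑ v, w2 v ω = 1)
    (hq1 : ∀ u, q1 u = ∑ ω, p ω * w1 u ω) (hq2 : ∀ v, q2 v = ∑ ω, p ω * w2 v ω)
    (hq12 : ∀ u v, q12 u v = ∑ ω, p ω * w1 u ω * w2 v ω) :
    mutInf (fun (ω : Ω) (q : U × V) => p ω * w1 q.1 ω * w2 q.2 ω) =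
      ∑ ω, ∑ u, ∑ v, p ω * w1 u ω * w2 v ω * (Real.logb 2 (w1 u ω / q1 u) +
        Real.logb 2 (w2 v ω / q2 v) - Real.logb 2 (q12 u v / (q1 u * q2 v))) := by
  unfold mutInf
  refine sum_congr rfl fun ω _ => ?_
  have hmarg : ∑ q : U × V, p ω * w1 q.1 ω * w2 q.2 ω = p ω := by
    rw [Fintype.sum_prod_type]
    simp_rw [← mul_sum, hw21, mul_one, ← mul_sum, hw11, mul_one]
  rw [hmarg, Fintype.sum_prod_type]
  refine sum_congr rfl fun u _ => sum_congr rfl fun v _ => ?_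
  dsimp only
  rw [← hq12]
  rcases eq_or_ne (p ω * w1 u ω * w2 v ω) 0 with h | h
  · rw [h, zero_mul, zero_mul]
  congr 1
  have hp := left_ne_zero_of_mul (left_ne_zero_of_mul h)
  have hw1 := right_ne_zero_of_mul (left_ne_zero_of_mul h)
  have hw2 := right_ne_zero_of_mul h
  have hq1' := (marginal_pos hp0 hw10 hq1 (mul_ne_zero hp hw1)).ne'
  have hq2' := (marginal_pos hp0 hw20 hq2 (mul_ne_zero hp hw2)).ne'
  have hq12' : q12 u v ≠ 0 := by
    have hnn : ∀ ω, 0 ≤ p ω * w1 u ω * w2 v ω := fun ω =>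
      mul_nonneg (mul_nonneg (hp0 ω) (hw10 u ω)) (hw20 v ω)
    rw [hq12]
    exact (sum_pos' (fun ω _ => hnn ω)
      ⟨ω, mem_univ ω, lt_of_le_of_ne (hnn ω) (Ne.symm h)⟩).ne'
  rw [← Real.logb_mul (div_ne_zero hw1 hq1') (div_ne_zero hw2 hq2'),
    ← Real.logb_div (mul_ne_zero (div_ne_zero hw1 hq1') (div_ne_zero hw2 hq2'))
      (div_ne_zero hq12' (mul_ne_zero hq1' hq2'))]
  congr 1
  field_simp

/-- Bin rates for distributed coding: in the Berger-Tung region one can choose nonnegative bin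
rates that satisfy both covering conditions and the packing condition. -/
lemma exists_bin_rates {I1 I2 I R1 R2 : ℝ} (h1 : I1 - I < R1) (h2 : I2 - I < R2)
    (h12 : I1 + I2 - I < R1 + R2) :
    ∃ ρ1 ρ2 : ℝ, 0 ≤ ρ1 ∧ 0 ≤ ρ2 ∧ I1 < R1 + ρ1 ∧ I2 < R2 + ρ2 ∧
      ((ρ1 = 0 ∧ ρ2 = 0) ∨ ρ1 + ρ2 < I) := by
  by_cases hI1 : I1 < R1
  · by_cases hI2 : I2 < R2
    · exact ⟨0, 0, le_rfl, le_rfl, by linarith, by linarith, Or.inl ⟨rfl, rfl⟩⟩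
    · obtain ⟨ρ, hρ, hρ'⟩ := exists_between (show I2 - R2 < I by linarith)
      exact ⟨0, ρ, le_rfl, by linarith, by linarith, by linarith, Or.inr (by linarith)⟩
  · by_cases hI2 : I2 < R2
    · obtain ⟨ρ, hρ, hρ'⟩ := exists_between (show I1 - R1 < I by linarith)
      exact ⟨ρ, 0, by linarith, le_rfl, by linarith, by linarith, Or.inr (by linarith)⟩
    · obtain ⟨s, hs, hs'⟩ := exists_between (show I1 - R1 + (I2 - R2) < I by linarith)
      refine ⟨I1 - R1 + (s - (I1 - R1 + (I2 - R2))) / 2,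
        I2 - R2 + (s - (I1 - R1 + (I2 - R2))) / 2, ?_, ?_, ?_, ?_, Or.inr ?_⟩ <;> linarith

end InformationIdentities

/-- A distributed source code: two separate stochastic encoders and a joint stochastic decoder. -/
structure DistributedCode (A1 A2 M1 M2 B : Type*) [Fintype M1] [Fintype M2] [Fintype B] where
  /-- The first encoder. -/
  enc1 : A1 → M1 → ℝ
  /-- The second encoder. -/
  enc2 : A2 → M2 → ℝ
  /-- The joint decoder. -/
  dec : M1 → M2 → B → ℝ
  enc1_kernel : ∀ x, (∀ m, 0 ≤ enc1 x m) ∧ ∑ m, enc1 x m = 1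
  enc2_kernel : ∀ x, (∀ m, 0 ≤ enc2 x m) ∧ ∑ m, enc2 x m = 1
  dec_kernel : ∀ m1 m2, (∀ y, 0 ≤ dec m1 m2 y) ∧ ∑ y, dec m1 m2 y = 1

namespace DistributedCode

variable {A1 A2 M1 M2 B : Type*} [Fintype A1] [Fintype A2] [Fintype M1] [Fintype M2] [Fintype B]

/-- The expected cost of a distributed code for the source `p` and the cost function `δ`. -/
noncomputable def cost (c : DistributedCode A1 A2 M1 M2 B) (p : A1 → A2 → ℝ)
    (δ : A1 → A2 → B → ℝ) : ℝ :=
  ∑ x1, ∑ x2, p x1 x2 * ∑ m1, ∑ m2, c.enc1 x1 m1 * c.enc2 x2 m2 * ∑ y, c.dec m1 m2 y * δ x1 x2 y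

lemma cost_nonneg (c : DistributedCode A1 A2 M1 M2 B) {p : A1 → A2 → ℝ}
    (hp : ∀ x1 x2, 0 ≤ p x1 x2) {δ : A1 → A2 → B → ℝ} (hδ : ∀ x1 x2 y, 0 ≤ δ x1 x2 y) :
    0 ≤ c.cost p δ :=
  sum_nonneg fun x1 _ => sum_nonneg fun x2 _ => mul_nonneg (hp x1 x2) <|
    sum_nonneg fun m1 _ => sum_nonneg fun m2 _ => mul_nonneg
      (mul_nonneg ((c.enc1_kernel x1).1 m1) ((c.enc2_kernel x2).1 m2)) <|
      sum_nonneg fun y _ => mul_nonneg ((c.dec_kernel m1 m2).1 y) (hδ x1 x2 y)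

end DistributedCode

lemma sum_indic_eq_mul {B : Type*} [Fintype B] (y₀ : B) (F : B → ℝ) :
    ∑ y, indic (y = y₀) * F y = F y₀ := by
  rw [sum_eq_single y₀ (fun y _ hy => by rw [indic_of_not hy, zero_mul])
    (fun h => absurd (mem_univ y₀) h), indic_of rfl, one_mul]

namespace DistributedCode

variable {A1 A2 V1 V2 M1 M2 L1 L2 B : Type*} [Fintype M1] [Fintype M2] [Fintype L1] [Fintype L2]
  [Fintype B] [Nonempty M1] [Nonempty M2] [Nonempty L1] [Nonempty L2]
  {s1 : A1 → V1 → ℝ} {s2 : A2 → V2 → ℝ}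

/-- The code that encodes with likelihood encoders for two binned codebooks, transmits the bin
indices and decodes deterministically. -/
noncomputable def ofCodebooks (hs1 : ∀ x v, 0 ≤ s1 x v) (hs2 : ∀ x v, 0 ≤ s2 x v)
    (C1 : M1 × L1 → V1) (C2 : M2 × L2 → V2) (y : M1 → M2 → B) :
    DistributedCode A1 A2 M1 M2 B where
  enc1 x m := ∑ l, likelihoodEncoder (s1 x) C1 (m, l)
  enc2 x m := ∑ l, likelihoodEncoder (s2 x) C2 (m, l)
  dec m1 m2 z := indic (z = y m1 m2)
  enc1_kernel x := ⟨fun m => sum_nonneg fun l _ => likelihoodEncoder_nonneg (hs1 x) C1 (m, l), by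
    rw [← Fintype.sum_prod_type', sum_likelihoodEncoder]⟩
  enc2_kernel x := ⟨fun m => sum_nonneg fun l _ => likelihoodEncoder_nonneg (hs2 x) C2 (m, l), by
    rw [← Fintype.sum_prod_type', sum_likelihoodEncoder]⟩
  dec_kernel m1 m2 := ⟨fun z => indic_nonneg _, by
    simpa using sum_indic_eq_mul (y m1 m2) fun _ => 1⟩

variable [Fintype A1] [Fintype A2]

lemma cost_ofCodebooks (hs1 : ∀ x v, 0 ≤ s1 x v) (hs2 : ∀ x v, 0 ≤ s2 x v)
    (C1 : M1 × L1 → V1) (C2 : M2 × L2 → V2) (y : M1 → M2 → B) (p : A1 → A2 → ℝ)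
    (δ : A1 → A2 → B → ℝ) :
    (ofCodebooks hs1 hs2 C1 C2 y).cost p δ = ∑ x1, ∑ x2, p x1 x2 * ∑ j1, ∑ j2,
      likelihoodEncoder (s1 x1) C1 j1 * likelihoodEncoder (s2 x2) C2 j2 *
        δ x1 x2 (y j1.1 j2.1) := by
  unfold cost ofCodebooks
  refine sum_congr rfl fun x1 _ => sum_congr rfl fun x2 _ => ?_
  congr 1
  simp only [sum_indic_eq_mul, Fintype.sum_prod_type]
  refine sum_congr rfl fun m1 _ => ?_
  rw [sum_comm]
  refine sum_congr rfl fun m2 _ => ?_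
  rw [sum_mul_sum, sum_mul]
  refine sum_congr rfl fun l1 _ => ?_
  rw [sum_mul]

/-- If the cost is at most `a` except on a failure event where it is at most `a + K`, then the
expected cost is at most `a` plus `K` times the failure probability. -/
lemma cost_ofCodebooks_le (hs1 : ∀ x v, 0 ≤ s1 x v) (hs2 : ∀ x v, 0 ≤ s2 x v)
    (C1 : M1 × L1 → V1) (C2 : M2 × L2 → V2) (y : M1 → M2 → B) {p : A1 → A2 → ℝ}
    (hp0 : ∀ x1 x2, 0 ≤ p x1 x2) (hp1 : ∑ x1, ∑ x2, p x1 x2 = 1)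
    {δ : A1 → A2 → B → ℝ} {a K : ℝ} {T : A1 → A2 → M1 → M2 → Prop}
    (hδ : ∀ x1 x2 m1 m2, δ x1 x2 (y m1 m2) ≤ a + K * indic (T x1 x2 m1 m2)) :
    (ofCodebooks hs1 hs2 C1 C2 y).cost p δ ≤ a + K * ∑ x1, ∑ x2, p x1 x2 * ∑ j1, ∑ j2,
      likelihoodEncoder (s1 x1) C1 j1 * likelihoodEncoder (s2 x2) C2 j2 *
        indic (T x1 x2 j1.1 j2.1) := by
  rw [cost_ofCodebooks]
  have ha : a = ∑ x1, ∑ x2, p x1 x2 * ∑ j1, ∑ j2,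
      likelihoodEncoder (s1 x1) C1 j1 * likelihoodEncoder (s2 x2) C2 j2 * a := by
    simp_rw [← sum_mul, ← sum_mul_sum, sum_likelihoodEncoder, one_mul, ← sum_mul, hp1, one_mul]
  conv_rhs => rw [ha]
  simp only [mul_sum, ← sum_add_distrib]
  refine sum_le_sum fun x1 _ => sum_le_sum fun x2 _ => sum_le_sum fun j1 _ =>
    sum_le_sum fun j2 _ => ?_
  have h := mul_le_mul_of_nonneg_left (hδ x1 x2 j1.1 j2.1) (mul_nonneg (hp0 x1 x2)
    (mul_nonneg (likelihoodEncoder_nonneg (hs1 x1) C1 j1)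
      (likelihoodEncoder_nonneg (hs2 x2) C2 j2)))
  linarith

end DistributedCode

/-- The per-letter average of a bounded function is at most `c`, except when its sum reaches
`n * c`. -/
lemma average_le_add_indic {n : ℕ} {f : Fin n → ℝ} {c K : ℝ} (hc : 0 ≤ c) (hK : 0 ≤ K)
    (hf : ∀ t, f t ≤ K) {T : Prop} (hT : n * c ≤ ∑ t, f t → T) :
    (n : ℝ)⁻¹ * ∑ t, f t ≤ c + K * indic T := by
  rcases Nat.eq_zero_or_pos n with rfl | hn
  · simp only [univ_eq_empty, sum_empty, mul_zero]
    exact add_nonneg hc (mul_nonneg hK (indic_nonneg T))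
  have hn' : (0 : ℝ) < n := Nat.cast_pos.2 hn
  rw [inv_mul_le_iff₀ hn']
  by_cases h : T
  · rw [indic_of h, mul_one]
    have hsum := sum_le_card_nsmul univ f K fun t _ => hf t
    rw [card_univ, Fintype.card_fin, nsmul_eq_mul] at hsum
    nlinarith
  · rw [indic_of_not h, mul_zero, add_zero]
    exact (not_le.1 fun h' => h (hT h')).le

/-- Diagonal selection: if for every `ε` some element eventually has both values within `ε` of
their targets, then a single sequence meets both targets in the limit superior. -/
lemma exists_seq_limsup_le {C : ℕ → Type*} [∀ n, Nonempty (C n)] {e1 e2 : ∀ n, C n → ℝ}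
    (h1 : ∀ n c, 0 ≤ e1 n c) (h2 : ∀ n c, 0 ≤ e2 n c) {D1 D2 : ℝ}
    (h : ∀ ε > 0, ∀ᶠ n in Filter.atTop, ∃ c : C n, e1 n c ≤ D1 + ε ∧ e2 n c ≤ D2 + ε) :
    ∃ c : ∀ n, C n, Filter.atTop.limsup (fun n => e1 n (c n)) ≤ D1 ∧
      Filter.atTop.limsup (fun n => e2 n (c n)) ≤ D2 := by
  have hbdd : ∀ n, BddBelow (Set.range fun c : C n => max (e1 n c - D1) (e2 n c - D2)) :=
    fun n => ⟨-D1, by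
      rintro _ ⟨c, rfl⟩
      exact le_max_of_le_left (by linarith [h1 n c])⟩
  have hsel : ∀ n, ∃ c : C n, max (e1 n c - D1) (e2 n c - D2) <
      (⨅ c : C n, max (e1 n c - D1) (e2 n c - D2)) + 1 / ((n : ℝ) + 1) := fun n =>
    exists_lt_of_ciInf_lt (lt_add_of_pos_right _ Nat.one_div_pos_of_nat)
  choose c hc using hsel
  have key : ∀ ε > 0, ∀ᶠ n in Filter.atTop, e1 n (c n) ≤ D1 + ε ∧ e2 n (c n) ≤ D2 + ε := by
    intro ε hε
    filter_upwards [h (ε / 2) (half_pos hε),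
      tendsto_one_div_add_atTop_nhds_zero_nat.eventually_lt_const (half_pos hε)]
      with n ⟨c', h1', h2'⟩ hn
    have hlt := (hc n).trans_le (add_le_add_left (ciInf_le (hbdd n) c') _)
    have hle : max (e1 n c' - D1) (e2 n c' - D2) ≤ ε / 2 :=
      max_le (by linarith) (by linarith)
    have := max_lt_iff.1 (show max (e1 n (c n) - D1) (e2 n (c n) - D2) < ε by linarith)
    exact ⟨by linarith [this.1], by linarith [this.2]⟩
  have hlim : ∀ {e : ∀ n, C n → ℝ} {D : ℝ}, (∀ n c, 0 ≤ e n c) →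
      (∀ ε > 0, ∀ᶠ n in Filter.atTop, e n (c n) ≤ D + ε) →
      Filter.atTop.limsup (fun n => e n (c n)) ≤ D := fun h0 hD =>
    le_of_forall_pos_le_add fun ε hε => Filter.limsup_le_of_le
      (Filter.isCoboundedUnder_le_of_le Filter.atTop fun n => h0 n (c n)) (hD ε hε)
  exact ⟨c, hlim h1 fun ε hε => (key ε hε).mono fun n hn => hn.1,
    hlim h2 fun ε hε => (key ε hε).mono fun n hn => hn.2⟩

lemma sum_source_eq {X1 X2 U1 U2 : Type*} [Fintype X1] [Fintype X2] [Fintype U1] [Fintype U2]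
    (Px : X1 × X2 → ℝ) (W1 : U1 → X1 → ℝ) (W2 : U2 → X2 → ℝ) (g : X1 → X2 → U1 → U2 → ℝ) :
    ∑ u1, ∑ x1, ∑ x2, ∑ u2, Px (x1, x2) * W1 u1 x1 * W2 u2 x2 * g x1 x2 u1 u2 =
      ∑ ω : X1 × X2, ∑ u1, ∑ u2, Px ω * W1 u1 ω.1 * W2 u2 ω.2 * g ω.1 ω.2 u1 u2 := by
  rw [sum_comm, Fintype.sum_prod_type]
  exact sum_congr rfl fun x1 _ => sum_comm

lemma exists_nonneg_upper_bound {A B : Type*} [Fintype A] [Fintype B] {d : A → B → ℝ}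
    (hd : ∀ a b, 0 ≤ d a b) : ∃ K, 0 ≤ K ∧ ∀ a b, d a b ≤ K :=
  ⟨∑ a, ∑ b, d a b, sum_nonneg fun a _ => sum_nonneg fun b _ => hd a b, fun a b =>
    (single_le_sum (fun b _ => hd a b) (mem_univ b)).trans
      (single_le_sum (f := fun a => ∑ b, d a b) (fun a _ => sum_nonneg fun b _ => hd a b)
        (mem_univ a))⟩

/-- Berger–Tung inner bound: Let `P̄_{X₁X₂}` be a joint source
pmf on the finite set `X₁ × X₂`, `P̄_{U₁|X₁}`, `P̄_{U₂|X₂}` conditional pmfs, so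
that `P̄(u₁,x₁,x₂,u₂) = P̄_{X₁X₂}(x₁,x₂) P̄_{U₁|X₁}(u₁|x₁) P̄_{U₂|X₂}(u₂|x₂)`,
and `φ_k : U₁ × U₂ → Y_k` reconstruction functions with
`E_{P̄}[d_k(X_k, φ_k(U₁,U₂))] ≤ D_k` for `k = 1,2`.  Then any rate pair with
`R₁ > I(X₁;U₁|U₂)`, `R₂ > I(X₂;U₂|U₁)` and `R₁ + R₂ > I(X₁,X₂;U₁,U₂)` is
achievable under distortions `(D₁,D₂)`: there are message sets of sizes
`≤ ⌈2^{nR₁}⌉` and `≤ ⌈2^{nR₂}⌉`, separate stochastic encoders and a joint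
stochastic decoder (Markov kernels) with
`limsup_n E[(1/n) ∑ₜ d_k(X_{k,t}, Y_{k,t})] ≤ D_k`, `k = 1,2`, for the i.i.d.
sources `(X₁ₜ, X₂ₜ) ∼ P̄_{X₁X₂}`. -/
theorem berger_tung_inner_bound
    {X1 X2 U1 U2 Y1 Y2 : Type*}
    [Fintype X1] [Fintype X2] [Fintype U1] [Fintype U2] [Fintype Y1] [Fintype Y2]
    (Px : X1 × X2 → ℝ)
    (hPx0 : ∀ p, 0 ≤ Px p) (hPx1 : ∑ p, Px p = 1)
    (W1 : U1 → X1 → ℝ) (hW10 : ∀ u x, 0 ≤ W1 u x) (hW11 : ∀ x, ∑ u, W1 u x = 1)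
    (W2 : U2 → X2 → ℝ) (hW20 : ∀ u x, 0 ≤ W2 u x) (hW21 : ∀ x, ∑ u, W2 u x = 1)
    (d1 : X1 → Y1 → ℝ) (hd1 : ∀ x y, 0 ≤ d1 x y)
    (d2 : X2 → Y2 → ℝ) (hd2 : ∀ x y, 0 ≤ d2 x y)
    (φ1 : U1 → U2 → Y1) (φ2 : U1 → U2 → Y2)
    (D1 D2 : ℝ)
    (hD1 : ∑ u1, ∑ x1, ∑ x2, ∑ u2,
        Px (x1, x2) * W1 u1 x1 * W2 u2 x2 * d1 x1 (φ1 u1 u2) ≤ D1)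
    (hD2 : ∑ u1, ∑ x1, ∑ x2, ∑ u2,
        Px (x1, x2) * W1 u1 x1 * W2 u2 x2 * d2 x2 (φ2 u1 u2) ≤ D2)
    (R1 R2 : ℝ)
    (hR1 : R1 > condMutInf (fun x1 u1 u2 =>
        ∑ x2, Px (x1, x2) * W1 u1 x1 * W2 u2 x2))
    (hR2 : R2 > condMutInf (fun x2 u2 u1 =>
        ∑ x1, Px (x1, x2) * W1 u1 x1 * W2 u2 x2))
    (hR12 : R1 + R2 > mutInf (fun (p : X1 × X2) (q : U1 × U2) =>
        Px p * W1 q.1 p.1 * W2 q.2 p.2)) :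
    ∃ M1 M2 : ℕ → ℕ,
      (∀ n, M1 n ≤ Nat.ceil ((2 : ℝ) ^ ((n : ℝ) * R1))) ∧
      (∀ n, M2 n ≤ Nat.ceil ((2 : ℝ) ^ ((n : ℝ) * R2))) ∧
      ∃ (enc1 : ∀ n : ℕ, (Fin n → X1) → Fin (M1 n) → ℝ)
        (enc2 : ∀ n : ℕ, (Fin n → X2) → Fin (M2 n) → ℝ)
        (dec : ∀ n : ℕ, Fin (M1 n) → Fin (M2 n) →
          ((Fin n → Y1) × (Fin n → Y2)) → ℝ),
        (∀ n x1n, (∀ m1, 0 ≤ enc1 n x1n m1) ∧ ∑ m1, enc1 n x1n m1 = 1) ∧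
        (∀ n x2n, (∀ m2, 0 ≤ enc2 n x2n m2) ∧ ∑ m2, enc2 n x2n m2 = 1) ∧
        (∀ n m1 m2, (∀ y, 0 ≤ dec n m1 m2 y) ∧ ∑ y, dec n m1 m2 y = 1) ∧
        Filter.atTop.limsup
          (fun n : ℕ =>
            ∑ x1n : Fin n → X1, ∑ x2n : Fin n → X2,
              (∏ t, Px (x1n t, x2n t)) *
                ∑ m1, ∑ m2, enc1 n x1n m1 * enc2 n x2n m2 *
                  ∑ y : (Fin n → Y1) × (Fin n → Y2), dec n m1 m2 y *
                    ((n : ℝ)⁻¹ * ∑ t, d1 (x1n t) (y.1 t)))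
          ≤ D1 ∧
        Filter.atTop.limsup
          (fun n : ℕ =>
            ∑ x1n : Fin n → X1, ∑ x2n : Fin n → X2,
              (∏ t, Px (x1n t, x2n t)) *
                ∑ m1, ∑ m2, enc1 n x1n m1 * enc2 n x2n m2 *
                  ∑ y : (Fin n → Y1) × (Fin n → Y2), dec n m1 m2 y *
                    ((n : ℝ)⁻¹ * ∑ t, d2 (x2n t) (y.2 t)))
          ≤ D2 := by
  have hW10' : ∀ (u : U1) (ω : X1 × X2), 0 ≤ W1 u ω.1 := fun u ω => hW10 u ω.1
  have hW20' : ∀ (u : U2) (ω : X1 × X2), 0 ≤ W2 u ω.2 := fun u ω => hW20 u ω.2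
  have hW11' : ∀ ω : X1 × X2, ∑ u, W1 u ω.1 = 1 := fun ω => hW11 ω.1
  have hW21' : ∀ ω : X1 × X2, ∑ u, W2 u ω.2 = 1 := fun ω => hW21 ω.2
  obtain ⟨q1, hq1⟩ : ∃ q1 : U1 → ℝ, ∀ u, q1 u = ∑ ω : X1 × X2, Px ω * W1 u ω.1 :=
    ⟨_, fun _ => rfl⟩
  obtain ⟨q2, hq2⟩ : ∃ q2 : U2 → ℝ, ∀ u, q2 u = ∑ ω : X1 × X2, Px ω * W2 u ω.2 :=
    ⟨_, fun _ => rfl⟩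
  obtain ⟨q12, hq12⟩ : ∃ q12 : U1 → U2 → ℝ,
      ∀ u1 u2, q12 u1 u2 = ∑ ω : X1 × X2, Px ω * W1 u1 ω.1 * W2 u2 ω.2 := ⟨_, fun _ _ => rfl⟩
  rw [gt_iff_lt, condMutInf_markov_eq (P := fun x1 x2 => Px (x1, x2)) (q1 := q1) (q2 := q2)
    (q12 := q12) (fun _ _ => hPx0 _) hW10 hW11 hW20
    (fun u => by rw [hq1, Fintype.sum_prod_type]) (fun u => by rw [hq2, Fintype.sum_prod_type])
    (fun u v => by rw [hq12, Fintype.sum_prod_type]),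
    ← Fintype.sum_prod_type' (fun x1 x2 => ∑ u1, ∑ u2, Px (x1, x2) * W1 u1 x1 * W2 u2 x2 *
      (Real.logb 2 (W1 u1 x1 / q1 u1) - Real.logb 2 (q12 u1 u2 / (q1 u1 * q2 u2))))] at hR1
  simp_rw [mul_right_comm _ (W1 _ _) (W2 _ _)] at hR2
  rw [gt_iff_lt, condMutInf_markov_eq (P := fun x2 x1 => Px (x1, x2)) (q1 := q2) (q2 := q1)
    (q12 := fun u2 u1 => q12 u1 u2) (fun _ _ => hPx0 _) hW20 hW21 hW10
    (fun u => by rw [hq2, Fintype.sum_prod_type_right])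
    (fun u => by rw [hq1, Fintype.sum_prod_type_right])
    (fun u v => by
      simp_rw [hq12, Fintype.sum_prod_type_right, mul_right_comm _ (W1 _ _) (W2 _ _)]),
    ← Fintype.sum_prod_type_right' (fun x1 x2 => ∑ u2, ∑ u1, Px (x1, x2) * W2 u2 x2 * W1 u1 x1 *
      (Real.logb 2 (W2 u2 x2 / q2 u2) - Real.logb 2 (q12 u1 u2 / (q2 u2 * q1 u1))))] at hR2
  simp_rw [sum_comm (s := (univ : Finset U2)) (t := (univ : Finset U1)),
    mul_right_comm _ (W2 _ _) (W1 _ _), mul_comm (q2 _) (q1 _)] at hR2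
  rw [gt_iff_lt, mutInf_prod_eq (w1 := fun u (ω : X1 × X2) => W1 u ω.1)
    (w2 := fun u (ω : X1 × X2) => W2 u ω.2) hPx0 hW10' hW11' hW20' hW21' hq1 hq2 hq12] at hR12
  simp only [mul_sub, mul_add, sum_sub_distrib, sum_add_distrib] at hR1 hR2 hR12
  obtain ⟨ρ1, ρ2, hρ1, hρ2, hI1, hI2, hρ⟩ := exists_bin_rates hR1 hR2 hR12
  rw [sum_source_eq Px W1 W2 fun x1 _ u1 u2 => d1 x1 (φ1 u1 u2)] at hD1
  rw [sum_source_eq Px W1 W2 fun _ x2 u1 u2 => d2 x2 (φ2 u1 u2)] at hD2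
  have hnn : ∀ (ω : X1 × X2) u1 u2, 0 ≤ Px ω * W1 u1 ω.1 * W2 u2 ω.2 := fun ω u1 u2 =>
    mul_nonneg (mul_nonneg (hPx0 ω) (hW10 u1 ω.1)) (hW20 u2 ω.2)
  have hD10 : 0 ≤ D1 := le_trans (sum_nonneg fun ω _ => sum_nonneg fun u1 _ =>
    sum_nonneg fun u2 _ => mul_nonneg (hnn ω u1 u2) (hd1 _ _)) hD1
  have hD20 : 0 ≤ D2 := le_trans (sum_nonneg fun ω _ => sum_nonneg fun u1 _ =>
    sum_nonneg fun u2 _ => mul_nonneg (hnn ω u1 u2) (hd2 _ _)) hD2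
  obtain ⟨K1, hK10, hK1⟩ := exists_nonneg_upper_bound hd1
  obtain ⟨K2, hK20, hK2⟩ := exists_nonneg_upper_bound hd2
  have hM : ∀ (n : ℕ) (R : ℝ), Nonempty (Fin ⌈(2 : ℝ) ^ ((n : ℝ) * R)⌉₊) := fun n R =>
    ⟨⟨0, Nat.ceil_pos.2 (by positivity)⟩⟩
  have hcode : ∀ ε > 0, ∀ᶠ n : ℕ in Filter.atTop,
      ∃ c : DistributedCode (Fin n → X1) (Fin n → X2) (Fin ⌈(2 : ℝ) ^ ((n : ℝ) * R1)⌉₊)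
        (Fin ⌈(2 : ℝ) ^ ((n : ℝ) * R2)⌉₊) ((Fin n → Y1) × (Fin n → Y2)),
        c.cost (fun x1 x2 => ∏ t, Px (x1 t, x2 t))
          (fun x1 _ y => (n : ℝ)⁻¹ * ∑ t, d1 (x1 t) (y.1 t)) ≤ D1 + ε ∧
        c.cost (fun x1 x2 => ∏ t, Px (x1 t, x2 t))
          (fun _ x2 y => (n : ℝ)⁻¹ * ∑ t, d2 (x2 t) (y.2 t)) ≤ D2 + ε := by
    intro ε hε
    have hK : 0 < 2 * (K1 + K2 + 1) := by positivity
    filter_upwards [eventually_exists_codebooks_failure_le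
      (w1 := fun u (ω : X1 × X2) => W1 u ω.1) (w2 := fun u (ω : X1 × X2) => W2 u ω.2)
      (g1 := fun ω u1 u2 => d1 ω.1 (φ1 u1 u2)) (g2 := fun ω u1 u2 => d2 ω.2 (φ2 u1 u2))
      (c1 := D1 + ε / 2) (c2 := D2 + ε / 2)
      hPx0 hPx1 hW10' hW11' hW20' hW21' hq1 hq2 hq12 (by linarith) (by linarith) hρ1 hρ2 hI1 hI2 hρ
      (div_pos hε hK)] with n ⟨L1, L2, C1, C2, dec, hL1, hL2, hfail⟩
    have := hM n R1
    have := hM n R2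
    have : Nonempty (Fin L1) := ⟨⟨0, hL1⟩⟩
    have : Nonempty (Fin L2) := ⟨⟨0, hL2⟩⟩
    rw [← sum_sum_pi_eq] at hfail
    have hp0 : ∀ (x1 : Fin n → X1) (x2 : Fin n → X2), 0 ≤ ∏ t, Px (x1 t, x2 t) := fun x1 x2 =>
      prod_nonneg fun t _ => hPx0 _
    have hp1 : ∑ x1 : Fin n → X1, ∑ x2 : Fin n → X2, ∏ t, Px (x1 t, x2 t) = 1 := by
      rw [sum_sum_pi_eq fun ω => ∏ t, Px (ω t), sum_pi_prod_eq fun (_ : Fin n) ω => Px ω]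
      simp [hPx1]
    have hs1 : ∀ (x : Fin n → X1) (v : Fin n → U1),
        0 ≤ (∏ t, W1 (v t) (x t)) / ∏ t, q1 (v t) := fun x v =>
      div_nonneg (prod_nonneg fun t _ => hW10 _ _)
        (prod_nonneg fun t _ => marginal_nonneg hPx0 hW10' hq1 _)
    have hs2 : ∀ (x : Fin n → X2) (v : Fin n → U2),
        0 ≤ (∏ t, W2 (v t) (x t)) / ∏ t, q2 (v t) := fun x v =>
      div_nonneg (prod_nonneg fun t _ => hW20 _ _)
        (prod_nonneg fun t _ => marginal_nonneg hPx0 hW20' hq2 _)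
    have hbound : ∀ {K : ℝ}, 0 ≤ K → K ≤ K1 + K2 → K * (ε / (2 * (K1 + K2 + 1))) ≤ ε / 2 := by
      intro K hK0 hKle
      rw [mul_div_assoc', div_le_div_iff₀ hK two_pos]
      nlinarith
    set y : Fin ⌈(2 : ℝ) ^ ((n : ℝ) * R1)⌉₊ → Fin ⌈(2 : ℝ) ^ ((n : ℝ) * R2)⌉₊ →
        (Fin n → Y1) × (Fin n → Y2) := fun m1 m2 =>
      (fun t => φ1 ((dec m1 m2).1 t) ((dec m1 m2).2 t),
        fun t => φ2 ((dec m1 m2).1 t) ((dec m1 m2).2 t))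
    have hcost := fun δ a K => DistributedCode.cost_ofCodebooks_le hs1 hs2 C1 C2 y hp0 hp1
      (δ := δ) (a := a) (K := K)
      (T := fun x1 x2 m1 m2 => n * (D1 + ε / 2) ≤ ∑ t, d1 (x1 t) ((y m1 m2).1 t) ∨
        n * (D2 + ε / 2) ≤ ∑ t, d2 (x2 t) ((y m1 m2).2 t))
    refine ⟨.ofCodebooks hs1 hs2 C1 C2 y,
      ((hcost _ (D1 + ε / 2) K1 fun x1 x2 m1 m2 => average_le_add_indic (by positivity)
        hK10 (fun t => hK1 _ _) Or.inl).trans (add_le_add le_rfl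
          (mul_le_mul_of_nonneg_left hfail hK10))).trans ?_,
      ((hcost _ (D2 + ε / 2) K2 fun x1 x2 m1 m2 => average_le_add_indic (by positivity)
        hK20 (fun t => hK2 _ _) Or.inr).trans (add_le_add le_rfl
          (mul_le_mul_of_nonneg_left hfail hK20))).trans ?_⟩
    · linarith [hbound hK10 (by linarith)]
    · linarith [hbound hK20 (by linarith)]
  obtain ⟨x1, x2⟩ : X1 × X2 :=
    (exists_ne_zero_of_sum_ne_zero (hPx1.trans_ne one_ne_zero)).choose
  obtain ⟨u1, -, -⟩ := exists_ne_zero_of_sum_ne_zero ((hW11 x1).trans_ne one_ne_zero)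
  obtain ⟨u2, -, -⟩ := exists_ne_zero_of_sum_ne_zero ((hW21 x2).trans_ne one_ne_zero)
  have hne : ∀ n : ℕ, Nonempty (DistributedCode (Fin n → X1) (Fin n → X2)
      (Fin ⌈(2 : ℝ) ^ ((n : ℝ) * R1)⌉₊) (Fin ⌈(2 : ℝ) ^ ((n : ℝ) * R2)⌉₊)
      ((Fin n → Y1) × (Fin n → Y2))) := fun n => by
    have := hM n R1
    have := hM n R2
    exact ⟨.ofCodebooks (s1 := fun _ _ => 0) (s2 := fun _ _ => 0) (fun _ _ => le_rfl)
      (fun _ _ => le_rfl) (id : _ × Unit → _) (id : _ × Unit → _)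
      fun _ _ => (fun _ => φ1 u1 u2, fun _ => φ2 u1 u2)⟩
  obtain ⟨c, hc1, hc2⟩ := exists_seq_limsup_le
    (fun n c => c.cost_nonneg (fun x1 x2 => prod_nonneg fun t _ => hPx0 _) fun x1 x2 y =>
      mul_nonneg (by positivity) (sum_nonneg fun t _ => hd1 _ _))
    (fun n c => c.cost_nonneg (fun x1 x2 => prod_nonneg fun t _ => hPx0 _) fun x1 x2 y =>
      mul_nonneg (by positivity) (sum_nonneg fun t _ => hd2 _ _)) hcode
  exact ⟨_, _, fun n => le_rfl, fun n => le_rfl, fun n => (c n).enc1, fun n => (c n).enc2,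
    fun n => (c n).dec, fun n => (c n).enc1_kernel, fun n => (c n).enc2_kernel,
    fun n => (c n).dec_kernel, hc1, hc2⟩
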